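/- arXiv:1612.01983 — 7 statements merged into one kernel-verified Lean document; each statement's English description precedes it below -/
import Mathlib

section
/- There exist a constant c > 0 and h_0 ∈ ℕ such that for all integers h ≥ h_0 and every integer k with h − 2√h ≤ k ≤ h − √h, if Z_0 = k then E[ Σ_{t=1}^{τ_h} (h − Z_t)/h ] ≥ c √h. -/
open MeasureTheory ProbabilityTheory

namespace BP

theorem geo_sums :
    HasSum (fun x : ℕ => ((x : ℝ)) * (1/2)^(x+1)) 1 ∧
    HasSum (fun x : ℕ => ((x : ℝ))^2 * (1/2)^(x+1)) 3 ∧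
    HasSum (fun x : ℕ => ((x : ℝ))^3 * (1/2)^(x+1)) 13 := by
  have hr : ‖(1/2 : ℝ)‖ < 1 := by norm_num
  have h0 := hasSum_choose_mul_geometric_of_norm_lt_one 0 hr
  have h1 := hasSum_choose_mul_geometric_of_norm_lt_one 1 hr
  have h2 := hasSum_choose_mul_geometric_of_norm_lt_one 2 hr
  have h3 := hasSum_choose_mul_geometric_of_norm_lt_one 3 hr
  have e2 : ∀ n : ℕ, (((n+2).choose 2 : ℕ) : ℝ) = ((n:ℝ)+1)*(n+2)/2 := by
    intro n
    have := Nat.descFactorial_eq_factorial_mul_choose (n+2) 2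
    have h' : ((n+2).descFactorial 2 : ℝ) = (Nat.factorial 2 : ℝ) * ((n+2).choose 2 : ℕ) := by
      exact_mod_cast this
    simp [Nat.descFactorial, Nat.factorial] at h'
    linarith
  have e3 : ∀ n : ℕ, (((n+3).choose 3 : ℕ) : ℝ) = ((n:ℝ)+1)*(n+2)*(n+3)/6 := by
    intro n
    have := Nat.descFactorial_eq_factorial_mul_choose (n+3) 3
    have h' : ((n+3).descFactorial 3 : ℝ) = (Nat.factorial 3 : ℝ) * ((n+3).choose 3 : ℕ) := by
      exact_mod_cast this
    simp [Nat.descFactorial, Nat.factorial] at h'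
    linarith
  simp only [e2] at h2
  simp only [e3] at h3
  norm_num at h0 h1 h2 h3
  refine ⟨?_, ?_, ?_⟩
  · convert! (h1.sub h0).mul_left (1/2) using 1
    · ext n; ring
    · norm_num
  · convert! ((h2.mul_left 2).sub ((h1.mul_left 3).sub h0)).mul_left (1/2) using 1
    · ext n; ring
    · norm_num
  · convert! ((h3.mul_left 6).sub (((h2.mul_left 12).sub (h1.mul_left 7)).add h0)).mul_left (1/2) using 1
    · ext n; ring
    · norm_num

variable {Ω : Type*} [MeasurableSpace Ω] {μ : Measure Ω} [IsProbabilityMeasure μ]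

theorem geo_integral (Y : Ω → ℕ) (hY : Measurable Y)
    (hd : ∀ j, μ {ω | Y ω = j} = (1 / 2) ^ (j + 1)) (f : ℕ → ℝ) (hf : ∀ n, 0 ≤ f n) (a : ℝ)
    (hs : HasSum (fun x : ℕ => f x * (1/2)^(x+1)) a) :
    Integrable (fun ω => f (Y ω)) μ ∧ ∫ ω, f (Y ω) ∂μ = a := by
  have hm : ∀ j, μ.map Y {j} = (1/2)^(j+1) := by
    intro j
    rw [Measure.map_apply hY (measurableSet_singleton j), ← hd j]; rfl
  have hmr : ∀ j, (μ.map Y).real {j} = (1/2)^(j+1) := by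
    intro j
    rw [Measure.real, hm]; simp
  have hi : Integrable f (μ.map Y) := by
    refine ⟨(measurable_of_countable f).aestronglyMeasurable, ?_⟩
    rw [hasFiniteIntegral_iff_ofReal (Filter.Eventually.of_forall hf), lintegral_countable']
    have : ∀ j, ENNReal.ofReal (f j) * (μ.map Y) {j} = ENNReal.ofReal (f j * (1/2)^(j+1)) := by
      intro j
      rw [ENNReal.ofReal_mul (hf j), hm, ENNReal.ofReal_pow (by norm_num)]
      congr 2
      rw [ENNReal.ofReal_div_of_pos (by norm_num)]; simp
    simp_rw [this]
    rw [← ENNReal.ofReal_tsum_of_nonneg (fun n => mul_nonneg (hf n) (by positivity)) hs.summable]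
    exact ENNReal.ofReal_lt_top
  refine ⟨(integrable_map_measure hi.1 hY.aemeasurable).1 hi, ?_⟩
  rw [← integral_map hY.aemeasurable hi.1, integral_countable hi]
  simp_rw [hmr, smul_eq_mul, mul_comm _ (f _)]
  exact hs.tsum_eq

theorem sum_moments (X : ℕ → ℕ → Ω → ℕ) (hXmeas : ∀ t i, Measurable (X t i))
    (hXindep : iIndepFun (fun p : ℕ × ℕ => X p.1 p.2) μ)
    (hXdist : ∀ t i j, μ {ω | X t i ω = j} = (1 / 2) ^ (j + 1)) (t : ℕ) (m : ℕ) :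
    (Integrable (fun ω => ((∑ i ∈ Finset.range m, X t i ω : ℕ) : ℝ)) μ ∧
      ∫ ω, ((∑ i ∈ Finset.range m, X t i ω : ℕ) : ℝ) ∂μ = m) ∧
    (Integrable (fun ω => ((∑ i ∈ Finset.range m, X t i ω : ℕ) : ℝ)^2) μ ∧
      ∫ ω, ((∑ i ∈ Finset.range m, X t i ω : ℕ) : ℝ)^2 ∂μ = m^2+2*m) ∧
    (Integrable (fun ω => ((∑ i ∈ Finset.range m, X t i ω : ℕ) : ℝ)^3) μ ∧
      ∫ ω, ((∑ i ∈ Finset.range m, X t i ω : ℕ) : ℝ)^3 ∂μ = m^3+6*m^2+6*m) := by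
  induction m with
  | zero => simp
  | succ m ih =>
    obtain ⟨⟨i1, v1⟩, ⟨i2, v2⟩, ⟨i3, v3⟩⟩ := ih
    obtain ⟨s1, s2, s3⟩ := geo_sums
    obtain ⟨j1, w1⟩ := geo_integral (X t m) (hXmeas t m) (hXdist t m) (fun x => (x:ℝ)) (fun _ => by positivity) _ s1
    obtain ⟨j2, w2⟩ := geo_integral (X t m) (hXmeas t m) (hXdist t m) (fun x => (x:ℝ)^2) (fun _ => by positivity) _ s2
    obtain ⟨j3, w3⟩ := geo_integral (X t m) (hXmeas t m) (hXdist t m) (fun x => (x:ℝ)^3) (fun _ => by positivity) _ s3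
    have hind : IndepFun (∑ i ∈ Finset.range m, X t i) (X t m) μ := by
      have hI : iIndepFun (fun i => X t i) μ :=
        hXindep.precomp (g := fun i : ℕ => (t, i)) (fun a b h => by simpa using h)
      exact hI.indepFun_sum_range_succ (hXmeas t) m
    have hS : (∑ i ∈ Finset.range m, X t i) = fun ω => ∑ i ∈ Finset.range m, X t i ω := by
      ext ω; simp
    rw [hS] at hind
    have mul : ∀ a b : ℕ, Integrable (fun ω => ((∑ i ∈ Finset.range m, X t i ω : ℕ) : ℝ)^a) μ →
        Integrable (fun ω => ((X t m ω : ℕ) : ℝ)^b) μ →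
        Integrable (fun ω => ((∑ i ∈ Finset.range m, X t i ω : ℕ) : ℝ)^a * ((X t m ω : ℕ) : ℝ)^b) μ ∧
        ∫ ω, ((∑ i ∈ Finset.range m, X t i ω : ℕ) : ℝ)^a * ((X t m ω : ℕ) : ℝ)^b ∂μ =
          (∫ ω, ((∑ i ∈ Finset.range m, X t i ω : ℕ) : ℝ)^a ∂μ) * ∫ ω, ((X t m ω : ℕ) : ℝ)^b ∂μ := by
      intro a b ha hb
      have := hind.comp (φ := fun x : ℕ => (x:ℝ)^a) (ψ := fun x : ℕ => (x:ℝ)^b)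
        (measurable_of_countable _) (measurable_of_countable _)
      exact ⟨this.integrable_mul ha hb, this.integral_fun_mul_eq_mul_integral ha.1 hb.1⟩
    obtain ⟨k11, u11⟩ := mul 1 1 (by simpa using i1) (by simpa using j1)
    obtain ⟨k21, u21⟩ := mul 2 1 i2 (by simpa using j1)
    obtain ⟨k12, u12⟩ := mul 1 2 (by simpa using i1) j2
    simp only [pow_one] at k11 u11 k21 u21 k12 u12
    simp only [Finset.sum_range_succ, Nat.cast_add (R := ℝ) (∑ i ∈ Finset.range m, X t i _)]
    generalize hA : (fun ω => ((∑ i ∈ Finset.range m, X t i ω : ℕ) : ℝ)) = A at *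
    have hA' : ∀ ω, ((∑ i ∈ Finset.range m, X t i ω : ℕ) : ℝ) = A ω := fun ω => congrFun hA ω
    simp only [hA'] at *
    have x2 : ∀ ω, (A ω + (X t m ω : ℝ))^2 = A ω ^2 + (2 * (A ω * X t m ω) + (X t m ω : ℝ)^2) := fun ω => by ring
    have x3 : ∀ ω, (A ω + (X t m ω : ℝ))^3 = A ω ^3 + (3 * (A ω ^2 * X t m ω) + (3 * (A ω * (X t m ω : ℝ)^2) + (X t m ω : ℝ)^3)) := fun ω => by ring
    simp only [x2, x3]
    have k2 : Integrable (fun ω => 2 * (A ω * X t m ω) + (X t m ω : ℝ)^2) μ := (k11.const_mul 2).add j2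
    have k3' : Integrable (fun ω => 3 * (A ω * (X t m ω : ℝ)^2) + (X t m ω : ℝ)^3) μ := (k12.const_mul 3).add j3
    have k3 : Integrable (fun ω => 3 * (A ω ^2 * X t m ω) + (3 * (A ω * (X t m ω : ℝ)^2) + (X t m ω : ℝ)^3)) μ := (k21.const_mul 3).add k3'
    refine ⟨⟨i1.add j1, ?_⟩, ⟨i2.add k2, ?_⟩, ⟨i3.add k3, ?_⟩⟩
    · rw [integral_add i1 j1, v1, w1]; push_cast; ring
    · rw [integral_add i2 k2, integral_add (k11.const_mul 2) j2, integral_const_mul, u11, v1, w1, v2, w2]; push_cast; ring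
    · rw [integral_add i3 k3, integral_add (k21.const_mul 3) k3', integral_add (k12.const_mul 3) j3, integral_const_mul, integral_const_mul, u12, u21, v1, w1, v2, w2, v3, w3]; push_cast; ring

end BP

namespace BP
variable {Ω : Type*} [MeasurableSpace Ω] {μ : Measure Ω} [IsProbabilityMeasure μ]

/-- the stopped chain, as a functional of the array of offspring numbers -/
def W (h k : ℕ) (x : ℕ → ℕ → ℕ) : ℕ → ℕ
  | 0 => k
  | n + 1 => if W h k x n < h then ∑ i ∈ Finset.range (W h k x n + 1), x n i else W h k x n

theorem W_congr (h k : ℕ) (x y : ℕ → ℕ → ℕ) (n : ℕ)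
    (hxy : ∀ s i, s < n → i ≤ h → x s i = y s i) : W h k x n = W h k y n := by
  induction n with
  | zero => rfl
  | succ n ih =>
    have ih' := ih (fun s i hs hi => hxy s i (by omega) hi)
    simp only [W, ih']
    split_ifs with hc
    · refine Finset.sum_congr rfl fun i hi => hxy n i (by omega) ?_
      have := Finset.mem_range.1 hi
      omega
    · rfl

theorem W_indep (X : ℕ → ℕ → Ω → ℕ) (hXmeas : ∀ t i, Measurable (X t i))
    (hXindep : iIndepFun (fun p : ℕ × ℕ => X p.1 p.2) μ) (h k n m : ℕ) :
    IndepFun (fun ω => W h k (fun t i => X t i ω) n)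
      (fun ω => ∑ i ∈ Finset.range m, X n i ω) μ := by
  let S : Finset (ℕ × ℕ) := Finset.range n ×ˢ Finset.range (h+1)
  let T : Finset (ℕ × ℕ) := {n} ×ˢ Finset.range m
  have hST : Disjoint S T := by
    rw [Finset.disjoint_left]
    rintro ⟨a, b⟩ h1 h2
    simp [S, T] at h1 h2
    omega
  have hI := hXindep.indepFun_finset S T hST (fun p => hXmeas p.1 p.2)
  let φ : (S → ℕ) → ℕ := fun v =>
    W h k (fun t i => if hp : (t, i) ∈ S then v ⟨(t, i), hp⟩ else 0) n
  let ψ : (T → ℕ) → ℕ := fun v =>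
    ∑ i ∈ Finset.range m, if hp : (n, i) ∈ T then v ⟨(n, i), hp⟩ else 0
  have := hI.comp (φ := φ) (ψ := ψ) (measurable_of_countable _) (measurable_of_countable _)
  convert! this using 1
  · ext ω
    refine W_congr h k _ _ n ?_
    intro s i hs hi
    have : (s, i) ∈ S := by simp [S]; omega
    simp [this]
  · ext ω
    simp only [ψ, Function.comp]
    refine Finset.sum_congr rfl fun i hi => ?_
    have : (n, i) ∈ T := by simpa [T] using hi
    simp [this]

theorem W_meas (X : ℕ → ℕ → Ω → ℕ) (hXmeas : ∀ t i, Measurable (X t i)) (h k n : ℕ) :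
    Measurable (fun ω => W h k (fun t i => X t i ω) n) := by
  induction n with
  | zero => exact measurable_const
  | succ n ih =>
    have hm : Measurable (fun ω => fun m : ℕ => ∑ i ∈ Finset.range m, X n i ω) :=
      measurable_pi_lambda _ fun m => Finset.measurable_sum _ fun i _ => hXmeas n i
    have he : Measurable (fun p : ℕ × (ℕ → ℕ) => if p.1 < h then p.2 (p.1 + 1) else p.1) := by
      refine measurable_from_prod_countable_right (fun z => ?_)
      by_cases hz : z < h
      · simp only [hz, if_true]; exact measurable_pi_apply _
      · simp only [hz, if_false]; exact measurable_const
    exact he.comp (ih.prodMk hm)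

/-- increments of the stopped chain -/
theorem W_step_point (h k : ℕ) (x : ℕ → ℕ → ℕ) (n : ℕ) (f : ℕ → ℝ) :
    f (W h k x (n+1)) = f (W h k x n) + ∑ z ∈ Finset.range h,
      (if W h k x n = z then (1:ℝ) else 0) *
        (f (∑ i ∈ Finset.range (z+1), x n i) - f z) := by
  by_cases hc : W h k x n < h
  · rw [Finset.sum_eq_single (W h k x n)]
    · simp [W, hc]
    · intro b _ hb; simp [hb.symm]
    · intro hh; simp [hc] at hh
  · rw [Finset.sum_eq_zero]
    · simp [W, hc]
    · intro z hz
      have : W h k x n ≠ z := by have := Finset.mem_range.1 hz; omega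
      simp [this]

theorem ind_point (h w : ℕ) (f : ℕ → ℝ) :
    (if w < h then f w else 0) = ∑ z ∈ Finset.range h, (if w = z then (1:ℝ) else 0) * f z := by
  simp [Finset.sum_ite_eq]

/-- one-step drift for cubic test functions -/
theorem W_step (X : ℕ → ℕ → Ω → ℕ) (hXmeas : ∀ t i, Measurable (X t i))
    (hXindep : iIndepFun (fun p : ℕ × ℕ => X p.1 p.2) μ)
    (hXdist : ∀ t i j, μ {ω | X t i ω = j} = (1 / 2) ^ (j + 1)) (h k n : ℕ) (a b c : ℝ)
    (hint : Integrable (fun ω => (fun z : ℕ => a*(z:ℝ)^3+b*(z:ℝ)^2+c*(z:ℝ)) (W h k (fun t i => X t i ω) n)) μ) :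
    Integrable (fun ω => (fun z : ℕ => a*(z:ℝ)^3+b*(z:ℝ)^2+c*(z:ℝ)) (W h k (fun t i => X t i ω) (n+1))) μ ∧
    ∫ ω, (fun z : ℕ => a*(z:ℝ)^3+b*(z:ℝ)^2+c*(z:ℝ)) (W h k (fun t i => X t i ω) (n+1)) ∂μ =
      ∫ ω, (fun z : ℕ => a*(z:ℝ)^3+b*(z:ℝ)^2+c*(z:ℝ)) (W h k (fun t i => X t i ω) n) ∂μ +
      ∫ ω, (if W h k (fun t i => X t i ω) n < h then
        (fun z : ℕ => a*(9*(z:ℝ)^2+21*z+13)+b*(4*(z:ℝ)+3)+c) (W h k (fun t i => X t i ω) n) else 0) ∂μ := by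
  set f : ℕ → ℝ := fun z : ℕ => a*(z:ℝ)^3+b*(z:ℝ)^2+c*(z:ℝ) with hf
  set w : Ω → ℕ := fun ω => W h k (fun t i => X t i ω) n with hw
  have hwm : Measurable w := W_meas X hXmeas h k n
  have hone : ∀ z : ℕ, Integrable (fun ω => if w ω = z then (1:ℝ) else 0) μ := by
    intro z
    refine Integrable.of_bound ((measurable_of_countable
      (fun y : ℕ => if y = z then (1:ℝ) else 0)).comp hwm).aestronglyMeasurable 1 ?_
    refine Filter.Eventually.of_forall fun ω => ?_
    show ‖(if w ω = z then (1:ℝ) else 0)‖ ≤ 1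
    split_ifs <;> simp
  have hfY : ∀ z : ℕ, Integrable (fun ω => f (∑ i ∈ Finset.range (z+1), X n i ω) - f z) μ ∧
      ∫ ω, (f (∑ i ∈ Finset.range (z+1), X n i ω) - f z) ∂μ =
        a*(9*(z:ℝ)^2+21*z+13)+b*(4*(z:ℝ)+3)+c := by
    intro z
    obtain ⟨⟨i1, v1⟩, ⟨i2, v2⟩, ⟨i3, v3⟩⟩ := sum_moments X hXmeas hXindep hXdist n (z+1)
    have I32 := (i3.const_mul a).add (i2.const_mul b)
    have I := I32.add (i1.const_mul c)
    have I' : Integrable (fun ω => f (∑ i ∈ Finset.range (z+1), X n i ω)) μ := I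
    refine ⟨I'.sub (integrable_const _), ?_⟩
    rw [integral_sub I' (integrable_const _)]
    simp only [hf]
    have e1 := integral_add I32 (i1.const_mul c)
    have e2 := integral_add (i3.const_mul a) (i2.const_mul b)
    simp only [Pi.add_apply] at e1
    rw [e1, e2]
    simp only [integral_const_mul]
    rw [v1, v2, v3]
    simp
    ring
  have hprod : ∀ z : ℕ, Integrable (fun ω => (if w ω = z then (1:ℝ) else 0) *
        (f (∑ i ∈ Finset.range (z+1), X n i ω) - f z)) μ ∧
      ∫ ω, (if w ω = z then (1:ℝ) else 0) *
        (f (∑ i ∈ Finset.range (z+1), X n i ω) - f z) ∂μ =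
      ∫ ω, (if w ω = z then (1:ℝ) else 0) * (a*(9*(z:ℝ)^2+21*z+13)+b*(4*(z:ℝ)+3)+c) ∂μ := by
    intro z
    have hI := (W_indep X hXmeas hXindep h k n (z+1)).comp
      (φ := fun y : ℕ => if y = z then (1:ℝ) else 0) (ψ := fun y : ℕ => f y - f z)
      (measurable_of_countable _) (measurable_of_countable _)
    refine ⟨hI.integrable_mul (hone z) (hfY z).1, ?_⟩
    have := hI.integral_fun_mul_eq_mul_integral (hone z).1 (hfY z).1.1
    rw [integral_mul_const, ← (hfY z).2]
    exact this
  have hp : ∀ ω, f (W h k (fun t i => X t i ω) (n+1)) = f (w ω) + ∑ z ∈ Finset.range h,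
      (if w ω = z then (1:ℝ) else 0) * (f (∑ i ∈ Finset.range (z+1), X n i ω) - f z) :=
    fun ω => W_step_point h k (fun t i => X t i ω) n f
  have hsum := integrable_finsetSum (Finset.range h) (fun z _ => (hprod z).1)
  simp only [hp]
  refine ⟨hint.add hsum, ?_⟩
  rw [integral_add hint hsum, integral_finsetSum _ (fun z _ => (hprod z).1)]
  congr 1
  have := fun ω => ind_point h (w ω) (fun z : ℕ => a*(9*(z:ℝ)^2+21*z+13)+b*(4*(z:ℝ)+3)+c)
  have hw' : ∀ ω, W h k (fun t i => X t i ω) n = w ω := fun ω => rfl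
  simp only [this, hw']
  rw [integral_finsetSum _ (fun z _ => (hone z).mul_const _)]
  exact Finset.sum_congr rfl fun z _ => (hprod z).2

end BP

namespace BP
variable {Ω : Type*} [MeasurableSpace Ω] {μ : Measure Ω} [IsProbabilityMeasure μ]

theorem ite_int (w : Ω → ℕ) (hwm : Measurable w) (h : ℕ) (φ : ℕ → ℝ) :
    Integrable (fun ω => if w ω < h then φ (w ω) else 0) μ := by
  refine Integrable.of_bound ((measurable_of_countable
      (fun y : ℕ => if y < h then φ y else 0)).comp hwm).aestronglyMeasurable
      (∑ z ∈ Finset.range h, |φ z|) ?_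
  refine Filter.Eventually.of_forall fun ω => ?_
  show ‖(if w ω < h then φ (w ω) else 0)‖ ≤ _
  split_ifs with hc
  · exact Finset.single_le_sum (f := fun z => |φ z|) (fun _ _ => abs_nonneg _) (Finset.mem_range.2 hc)
  · simp; exact Finset.sum_nonneg fun _ _ => abs_nonneg _

theorem W_tele (X : ℕ → ℕ → Ω → ℕ) (hXmeas : ∀ t i, Measurable (X t i))
    (hXindep : iIndepFun (fun p : ℕ × ℕ => X p.1 p.2) μ)
    (hXdist : ∀ t i j, μ {ω | X t i ω = j} = (1 / 2) ^ (j + 1)) (h k : ℕ) (a b c : ℝ) (n : ℕ) :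
    Integrable (fun ω => (fun z : ℕ => a*(z:ℝ)^3+b*(z:ℝ)^2+c*(z:ℝ)) (W h k (fun t i => X t i ω) n)) μ ∧
    ∫ ω, (fun z : ℕ => a*(z:ℝ)^3+b*(z:ℝ)^2+c*(z:ℝ)) (W h k (fun t i => X t i ω) n) ∂μ =
      (a*(k:ℝ)^3+b*(k:ℝ)^2+c*(k:ℝ)) + ∑ t ∈ Finset.range n,
      ∫ ω, (if W h k (fun t i => X t i ω) t < h then
        (fun z : ℕ => a*(9*(z:ℝ)^2+21*z+13)+b*(4*(z:ℝ)+3)+c) (W h k (fun t i => X t i ω) t) else 0) ∂μ := by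
  induction n with
  | zero => simp [W]
  | succ n ih =>
    obtain ⟨i, e⟩ := W_step X hXmeas hXindep hXdist h k n a b c ih.1
    refine ⟨i, ?_⟩
    rw [e, ih.2, Finset.sum_range_succ, add_assoc]

theorem bracket_nonneg (h z : ℝ) (hh : 2 ≤ h) (hz : 0 ≤ z) :
    0 ≤ (h^2+h*z+z^2)/9 - (3*h/4+7/12)*(h+z) + 2*h^2 + 3*(3*h/4+7/12) - 13/9 := by
  nlinarith [sq_nonneg (z - 3*h), sq_nonneg (z-2.875*h-2.625), mul_nonneg (sub_nonneg.2 hh) (sub_nonneg.2 hh)]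

theorem bracket_lower (h z : ℝ) (hh : 1 ≤ h) (hz : 0 ≤ z) (hzh : z ≤ h) :
    h^2/2 ≤ (h^2+h*z+z^2)/9 - (3*h/4+7/12)*(h+z) + 2*h^2 + 3*(3*h/4+7/12) - 13/9 := by
  nlinarith [mul_nonneg hz (sub_nonneg.2 hzh), mul_nonneg (sub_nonneg.2 hh) (sub_nonneg.2 hzh), sq_nonneg (h - z)]

theorem main_bounds (X : ℕ → ℕ → Ω → ℕ) (hXmeas : ∀ t i, Measurable (X t i))
    (hXindep : iIndepFun (fun p : ℕ × ℕ => X p.1 p.2) μ)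
    (hXdist : ∀ t i j, μ {ω | X t i ω = j} = (1 / 2) ^ (j + 1)) (h k : ℕ) (hk : k < h) (h2 : 2 ≤ h) (n : ℕ) :
    Integrable (fun ω => (W h k (fun t i => X t i ω) n : ℝ)) μ ∧
    ∫ ω, (W h k (fun t i => X t i ω) n : ℝ) ∂μ ≤ 4*h+3 ∧
    ∑ t ∈ Finset.range n, ∫ ω, (if W h k (fun t i => X t i ω) t < h then (1:ℝ) else 0) ∂μ ≤ 4*h+3 ∧
    ∃ C : ℝ, ∀ n, (h:ℝ) * (h-k)/4 - C * ∫ ω, (if W h k (fun t i => X t i ω) n < h then (1:ℝ) else 0) ∂μ ≤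
      ∑ t ∈ Finset.range n, ∫ ω, (if W h k (fun t i => X t i ω) t < h then
        (h:ℝ) - (W h k (fun t i => X t i ω) t : ℝ) else 0) ∂μ := by
  have hwm := W_meas X hXmeas h k
  have T := W_tele X hXmeas hXindep hXdist h k
  set w : ℕ → Ω → ℕ := fun n ω => W h k (fun t i => X t i ω) n with hw
  have hw' : ∀ n ω, W h k (fun t i => X t i ω) n = w n ω := fun _ _ => rfl
  simp only [hw'] at *
  have hkh : (k:ℝ) + 1 ≤ h := by exact_mod_cast hk
  have hk0 : (0:ℝ) ≤ k := by positivity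
  have L := T 0 0 1 n
  have Q := T 0 1 (-(4*h+3)) n
  have Q2 := T 0 1 0 n
  simp only [zero_mul, one_mul, zero_add, add_zero] at L Q Q2
  have hL : Integrable (fun ω => (w n ω : ℝ)) μ := L.1
  have hm : ∫ ω, (w n ω : ℝ) ∂μ ≤ 4*h+3 := by
    have h1 : ∑ t ∈ Finset.range n, ∫ ω, (if w t ω < h then
        4*(w t ω:ℝ)+3 + -(4*(h:ℝ)+3) else 0) ∂μ ≤ 0 := by
      refine Finset.sum_nonpos fun t _ => integral_nonpos fun ω => ?_
      show (if w t ω < h then 4*(w t ω:ℝ)+3 + -(4*(h:ℝ)+3) else 0) ≤ 0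
      split_ifs with hc
      · have : (w t ω : ℝ) ≤ h := by exact_mod_cast hc.le
        linarith
      · exact le_rfl
    have e1 : ∫ ω, ((w n ω:ℝ)^2 + -(4*(h:ℝ)+3) * (w n ω:ℝ)) ∂μ =
        ∫ ω, (w n ω:ℝ)^2 ∂μ + -(4*(h:ℝ)+3) * ∫ ω, (w n ω:ℝ) ∂μ := by
      rw [integral_add Q2.1 (hL.const_mul _), integral_const_mul]
    have e2 : 0 ≤ ∫ ω, ((w n ω:ℝ) - ∫ ω, (w n ω:ℝ) ∂μ)^2 ∂μ := integral_nonneg fun ω => sq_nonneg _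
    set m := ∫ ω, (w n ω:ℝ) ∂μ with hmdef
    have e3 : ∫ ω, ((w n ω:ℝ) - m)^2 ∂μ = ∫ ω, (w n ω:ℝ)^2 ∂μ - m^2 := by
      have : ∀ ω, ((w n ω:ℝ) - m)^2 = (w n ω:ℝ)^2 + ((-2*m) * (w n ω:ℝ) + m^2) := fun ω => by ring
      simp only [this]
      have k2 : Integrable (fun ω => (-2*m) * (w n ω:ℝ) + m^2) μ :=
        (hL.const_mul _).add (integrable_const _)
      rw [integral_add Q2.1 k2,
        integral_add (hL.const_mul _) (integrable_const _), integral_const_mul, ← hmdef]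
      simp; ring
    have e4 := Q.2
    rw [e1] at e4
    have e5 : (k:ℝ)^2 + -(4*(h:ℝ)+3)*k ≤ 0 := by nlinarith
    by_contra hcon
    push Not at hcon
    nlinarith
  refine ⟨hL, hm, ?_, ?_⟩
  · rw [L.2] at hm; linarith
  set a : ℝ := 3*h/4+7/12 with ha
  set b : ℝ := -2*h^2 + 13/9 - 3*a with hb
  set G : ℝ → ℝ := fun z => (-1/9)*z^3 + a*z^2 + b*z with hG
  have hh1 : (1:ℝ) ≤ h := by linarith
  have hdiff : ∀ z : ℝ, G z - G h = (h - z) * ((h^2+h*z+z^2)/9 - (3*h/4+7/12)*(h+z) + 2*h^2 + 3*(3*h/4+7/12) - 13/9) := by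
    intro z; simp only [hG, hb, ha]; ring
  have hGk : (h:ℝ)^2/2 * (h-k) ≤ G k - G h := by
    rw [hdiff, mul_comm]
    exact mul_le_mul_of_nonneg_left (bracket_lower h k hh1 hk0 (by linarith)) (by linarith)
  have hGneg : ∀ z : ℝ, 0 ≤ z → G z ≤ 0 := by
    intro z hz
    have : (-1/9)*z^2 + a*z + b ≤ 0 := by
      simp only [hb, ha]
      nlinarith [sq_nonneg (z - 3.375*h-2.625), sq_nonneg (z-3*h)]
    have := mul_nonpos_of_nonneg_of_nonpos hz this
    simp only [hG]; linarith
  have hGh : ∀ z : ℝ, (h:ℝ) ≤ z → G z ≤ G h := by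
    intro z hz
    have := hdiff z
    have h2 := bracket_nonneg h z (by exact_mod_cast h2) (by linarith)
    have := mul_nonneg (sub_nonneg.2 hz) h2
    linarith
  refine ⟨-G h / (2*h), fun n => ?_⟩
  obtain ⟨iG, eG⟩ := T (-1/9) a b n
  have u1 : ∫ ω, G (w n ω) ∂μ ≤ G h + -G h * ∫ ω, (if w n ω < h then (1:ℝ) else 0) ∂μ := by
    have iI := ite_int (μ := μ) (w n) (hwm n) h (fun _ => (1:ℝ))
    have : G h + -G h * ∫ ω, (if w n ω < h then (1:ℝ) else 0) ∂μ =
        ∫ ω, (G h + -G h * (if w n ω < h then (1:ℝ) else 0)) ∂μ := by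
      rw [integral_add (integrable_const _) (iI.const_mul _), integral_const_mul]; simp
    rw [this]
    refine integral_mono iG ((integrable_const _).add (iI.const_mul _)) fun ω => ?_
    show G (w n ω) ≤ G h + -G h * (if w n ω < h then (1:ℝ) else 0)
    split_ifs with hc
    · have := hGneg (w n ω) (by positivity); linarith
    · have := hGh (w n ω) (by exact_mod_cast not_lt.1 hc); linarith
  have u2 : ∀ t, -(2*h * ∫ ω, (if w t ω < h then (h:ℝ) - (w t ω : ℝ) else 0) ∂μ) ≤
      ∫ ω, (if w t ω < h then (-1/9)*(9*(w t ω:ℝ)^2+21*(w t ω)+13)+a*(4*(w t ω:ℝ)+3)+b else 0) ∂μ := by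
    intro t
    rw [← integral_const_mul, ← integral_neg]
    refine integral_mono ((ite_int (w t) (hwm t) h (fun z => (h:ℝ) - z)).const_mul _).neg
      (ite_int (w t) (hwm t) h (fun z => (-1/9)*(9*(z:ℝ)^2+21*z+13)+a*(4*(z:ℝ)+3)+b)) fun ω => ?_
    show -(2*h * (if w t ω < h then (h:ℝ) - (w t ω : ℝ) else 0)) ≤
      (if w t ω < h then (-1/9)*(9*(w t ω:ℝ)^2+21*(w t ω)+13)+a*(4*(w t ω:ℝ)+3)+b else 0)
    split_ifs with hc
    · have h1 : (w t ω : ℝ) ≤ h := by exact_mod_cast hc.le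
      have h2 : (0:ℝ) ≤ w t ω := by positivity
      simp only [hb, ha]
      nlinarith [mul_nonneg h2 (sub_nonneg.2 h1)]
    · simp
  have u3 := Finset.sum_le_sum (s := Finset.range n) fun t _ => u2 t
  rw [Finset.sum_neg_distrib, ← Finset.mul_sum] at u3
  have eG' : ∫ ω, G (w n ω) ∂μ = G k + ∑ t ∈ Finset.range n,
      ∫ ω, (if w t ω < h then (-1/9)*(9*(w t ω:ℝ)^2+21*(w t ω)+13)+a*(4*(w t ω:ℝ)+3)+b else 0) ∂μ := eG
  set P := ∫ ω, (if w n ω < h then (1:ℝ) else 0) ∂μ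
  set S := ∑ t ∈ Finset.range n, ∫ ω, (if w t ω < h then (h:ℝ) - (w t ω : ℝ) else 0) ∂μ
  have key : (h:ℝ)^2/2*(h-k) + G h * P ≤ 2*h*S := by linarith
  have h0 : (0:ℝ) < 2*h := by linarith
  have : (h:ℝ) * (h-k)/4 - -G h/(2*h) * P = ((h:ℝ)^2/2*(h-k) + G h * P)/(2*h) := by
    field_simp; ring
  rw [this, div_le_iff₀ h0]
  linarith

end BP

namespace BP
variable {Ω : Type*} [MeasurableSpace Ω] {μ : Measure Ω} [IsProbabilityMeasure μ]

theorem W_eq_Z (h k : ℕ) (x : ℕ → ℕ → ℕ) (Z : ℕ → ℕ) (hZ0 : Z 0 = k)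
    (hZ : ∀ t, Z (t+1) = ∑ i ∈ Finset.range (Z t + 1), x t i) (n : ℕ)
    (hn : ∀ t < n, Z t < h) : W h k x n = Z n := by
  induction n with
  | zero => exact hZ0.symm
  | succ n ih =>
    have := ih (fun t ht => hn t (by omega))
    simp [W, this, hn n (by omega), hZ]

theorem W_after (h k : ℕ) (x : ℕ → ℕ → ℕ) (T : ℕ) (hT : h ≤ W h k x T) (n : ℕ) (hn : T ≤ n) :
    W h k x n = W h k x T := by
  induction n, hn using Nat.le_induction with
  | base => rfl
  | succ n hn ih => simp [W, ih, not_lt.2 hT]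

/-- alive indicator sum -/
theorem path_facts (h k : ℕ) (x : ℕ → ℕ → ℕ) (Z : ℕ → ℕ) (hZ0 : Z 0 = k)
    (hZ : ∀ t, Z (t+1) = ∑ i ∈ Finset.range (Z t + 1), x t i)
    (hex : ∃ n, h ≤ W h k x n) :
    ∀ T, T = sInf {t : ℕ | h ≤ Z t} →
    (∀ n, T ≤ n → (W h k x n = Z T ∧
      (∑ t ∈ Finset.range n, if W h k x t < h then (1:ℝ) else 0) = T ∧
      (∑ t ∈ Finset.range n, if W h k x t < h then (h:ℝ) - W h k x t else 0) + k - W h k x n =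
        ∑ t ∈ Finset.Icc 1 T, ((h:ℝ) - Z t))) ∧
    (∀ n, (W h k x n ≤ h + Z T ∧
      (∑ t ∈ Finset.range n, if W h k x t < h then (1:ℝ) else 0) ≤ T)) := by
  intro T hT
  have hex' : {t : ℕ | h ≤ Z t}.Nonempty := by
    by_contra hne
    rw [Set.not_nonempty_iff_eq_empty] at hne
    have hlt : ∀ t, Z t < h := by
      intro t
      by_contra hc
      have : t ∈ {t : ℕ | h ≤ Z t} := not_lt.1 hc
      rw [hne] at this; exact this
    obtain ⟨n, hn⟩ := hex
    rw [W_eq_Z h k x Z hZ0 hZ n (fun t _ => hlt t)] at hn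
    exact absurd (hlt n) (not_lt.2 hn)
  have hTm : h ≤ Z T := by rw [hT]; exact Nat.sInf_mem hex'
  have hlt : ∀ t < T, Z t < h := by
    intro t ht
    by_contra hc
    have := Nat.sInf_le (show t ∈ {t : ℕ | h ≤ Z t} from not_lt.1 hc)
    omega
  have hbe : ∀ n ≤ T, W h k x n = Z n := fun n hn =>
    W_eq_Z h k x Z hZ0 hZ n (fun t ht => hlt t (by omega))
  have haf : ∀ n, T ≤ n → W h k x n = Z T := fun n hn => by
    rw [W_after h k x T (by rw [hbe T le_rfl]; exact hTm) n hn, hbe T le_rfl]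
  have hA : ∀ n, n ≤ T →
      (∑ t ∈ Finset.range n, if W h k x t < h then (1:ℝ) else 0) = n ∧
      (∑ t ∈ Finset.range n, if W h k x t < h then (h:ℝ) - W h k x t else 0) + k - W h k x n =
        ∑ t ∈ Finset.Icc 1 n, ((h:ℝ) - Z t) := by
    intro n
    induction n with
    | zero => intro _; simp [W]
    | succ n ih =>
      intro hn
      obtain ⟨a1, a2⟩ := ih (by omega)
      have b1 := hbe n (by omega)
      have b2 := hbe (n+1) hn
      have b3 := hlt n (by omega)
      rw [Finset.sum_range_succ, Finset.sum_range_succ, a1, Finset.sum_Icc_succ_top (by omega), ← a2,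
        b1, b2]
      simp only [b3, if_true]
      refine ⟨by push_cast; ring, by ring⟩
  have hmain : ∀ n, T ≤ n → (W h k x n = Z T ∧
      (∑ t ∈ Finset.range n, if W h k x t < h then (1:ℝ) else 0) = T ∧
      (∑ t ∈ Finset.range n, if W h k x t < h then (h:ℝ) - W h k x t else 0) + k - W h k x n =
        ∑ t ∈ Finset.Icc 1 T, ((h:ℝ) - Z t)) := by
    intro n hn
    refine ⟨haf n hn, ?_⟩
    induction n, hn using Nat.le_induction with
    | base => exact hA T le_rfl
    | succ n hn ih =>
      have c : ¬ (Z T < h) := not_lt.2 hTm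
      rw [Finset.sum_range_succ, Finset.sum_range_succ, haf (n+1) (by omega)]
      rw [haf n hn] at ih ⊢
      simp only [c, if_false, add_zero]
      exact ih
  refine ⟨hmain, fun n => ?_⟩
  rcases le_total T n with hn | hn
  · obtain ⟨a, b, _⟩ := hmain n hn
    exact ⟨by omega, b.le⟩
  · refine ⟨?_, ?_⟩
    · rcases hn.lt_or_eq with hn' | rfl
      · rw [hbe n hn]; have := hlt n hn'; omega
      · rw [hbe n le_rfl]; omega
    · rw [(hA n hn).1]; exact_mod_cast hn

end BP

/-- There are `c > 0` and `h₀` such that for all `h ≥ h₀` and all starting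
points `k` with `h − 2√h ≤ k ≤ h − √h`, the chain `Z` started at `k` satisfies
`E[Σ_{t=1}^{τ_h} (h − Z_t)/h] ≥ c √h`. -/
theorem expected_weighted_time_below_h
    {Ω : Type*} [MeasurableSpace Ω] (μ : Measure Ω) [IsProbabilityMeasure μ]
    -- i.i.d. offspring variables, geometric with mean 1: P(X_{t,i} = j) = 2^{-j-1}
    (X : ℕ → ℕ → Ω → ℕ) (hXmeas : ∀ t i, Measurable (X t i))
    (hXindep : iIndepFun (fun p : ℕ × ℕ => X p.1 p.2) μ)
    (hXdist : ∀ t i j, μ {ω | X t i ω = j} = (1 / 2) ^ (j + 1)) :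
    ∃ c : ℝ, 0 < c ∧ ∃ h₀ : ℕ, ∀ h : ℕ, h₀ ≤ h →
      ∀ k : ℕ, (h : ℝ) - 2 * Real.sqrt h ≤ (k : ℝ) → (k : ℝ) ≤ (h : ℝ) - Real.sqrt h →
      ∀ Z : ℕ → Ω → ℕ, (∀ ω, Z 0 ω = k) →
        (∀ t ω, Z (t + 1) ω = ∑ i ∈ Finset.range (Z t ω + 1), X t i ω) →
      ∀ τ : Ω → ℕ, (∀ ω, τ ω = sInf {t : ℕ | h ≤ Z t ω}) →
      c * Real.sqrt h ≤ ∫ ω, (∑ t ∈ Finset.Icc 1 (τ ω), ((h : ℝ) - Z t ω) / h) ∂μ := by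
  refine ⟨1/8, by norm_num, 10000, ?_⟩
  intro h hh k _ hk2 Z hZ0 hZ τ hτ
  have hhR : (10000:ℝ) ≤ h := by exact_mod_cast hh
  have hsq : Real.sqrt h * Real.sqrt h = h := Real.mul_self_sqrt (by linarith)
  have hs100 : 100 ≤ Real.sqrt h := Real.le_sqrt_of_sq_le (by linarith)
  have hkh : k < h := by
    have : (k:ℝ) < h := by linarith
    exact_mod_cast this
  have B := BP.main_bounds X hXmeas hXindep hXdist h k hkh (by omega)
  have hwm := BP.W_meas X hXmeas h k
  have PF := fun ω => BP.path_facts h k (fun t i => X t i ω) (fun t => Z t ω) (hZ0 ω)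
    (fun t => hZ t ω)
  set w : ℕ → Ω → ℕ := fun n ω => BP.W h k (fun t i => X t i ω) n with hw
  have hw' : ∀ n ω, BP.W h k (fun t i => X t i ω) n = w n ω := fun _ _ => rfl
  simp only [hw'] at B PF hwm
  have hwi : ∀ n, Integrable (fun ω => (w n ω : ℝ)) μ := fun n => (B n).1
  have hm : ∀ n, ∫ ω, (w n ω : ℝ) ∂μ ≤ 4*h+3 := fun n => (B n).2.1
  have hP : ∀ n, ∑ t ∈ Finset.range n, ∫ ω, (if w t ω < h then (1:ℝ) else 0) ∂μ ≤ 4*h+3 :=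
    fun n => (B n).2.2.1
  obtain ⟨C, hC⟩ := (B 0).2.2.2
  have hoi : ∀ n, Integrable (fun ω => if w n ω < h then (1:ℝ) else 0) μ := fun n =>
    BP.ite_int (w n) (hwm n) h (fun _ => 1)
  have hdi : ∀ n, Integrable (fun ω => if w n ω < h then (h:ℝ) - w n ω else 0) μ := fun n =>
    BP.ite_int (w n) (hwm n) h (fun z => (h:ℝ) - z)
  have hP0 : ∀ n, 0 ≤ ∫ ω, (if w n ω < h then (1:ℝ) else 0) ∂μ := fun n =>
    integral_nonneg fun ω => by
      show (0:ℝ) ≤ if w n ω < h then (1:ℝ) else 0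
      split_ifs <;> norm_num
  have hPlim : Filter.Tendsto (fun n => ∫ ω, (if w n ω < h then (1:ℝ) else 0) ∂μ) Filter.atTop (nhds 0) :=
    (summable_of_sum_range_le hP0 hP).tendsto_atTop_zero
  -- almost surely the level is reached
  have hae : ∀ᵐ ω ∂μ, ∃ n, h ≤ w n ω := by
    rw [ae_iff]
    have hPm : ∀ n, ∫ ω, (if w n ω < h then (1:ℝ) else 0) ∂μ = μ.real {ω | w n ω < h} := by
      intro n
      have hms : MeasurableSet {ω | w n ω < h} := (hwm n) (measurableSet_Iio (a := h))
      rw [← integral_indicator_one hms]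
      refine integral_congr_ae (Filter.Eventually.of_forall fun ω => ?_)
      simp [Set.indicator_apply]
    have hle : ∀ n, μ.real {ω | ¬ ∃ n, h ≤ w n ω} ≤ ∫ ω, (if w n ω < h then (1:ℝ) else 0) ∂μ := by
      intro n
      rw [hPm]
      refine measureReal_mono fun ω hω => ?_
      by_contra hc
      exact hω ⟨n, not_lt.1 hc⟩
    have h0 : μ.real {ω | ¬ ∃ n, h ≤ w n ω} ≤ 0 :=
      ge_of_tendsto' hPlim hle
    have h1 := le_antisymm h0 measureReal_nonneg
    exact (measureReal_eq_zero_iff).1 h1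
  -- dominating function
  set Dn : ℕ → Ω → ℝ := fun n ω => h * (∑ t ∈ Finset.range n, if w t ω < h then (1:ℝ) else 0) + w n ω with hDn
  set D : Ω → ℝ := fun ω => h * (τ ω : ℝ) + Z (τ ω) ω with hD
  have hDni : ∀ n, Integrable (Dn n) μ := fun n =>
    ((integrable_finsetSum _ fun t _ => hoi t).const_mul _).add (hwi n)
  have hDn0 : ∀ n ω, 0 ≤ Dn n ω := by
    intro n ω
    have : 0 ≤ ∑ t ∈ Finset.range n, (if w t ω < h then (1:ℝ) else 0) :=
      Finset.sum_nonneg fun t _ => by split_ifs <;> norm_num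
    simp only [hDn]
    positivity
  have hDnb : ∀ n, ∫ ω, Dn n ω ∂μ ≤ h*(4*h+3)+(4*h+3) := by
    intro n
    simp only [hDn]
    rw [integral_add ((integrable_finsetSum _ fun t _ => hoi t).const_mul _) (hwi n),
      integral_const_mul, integral_finsetSum _ fun t _ => hoi t]
    exact add_le_add (mul_le_mul_of_nonneg_left (hP n) (by positivity)) (hm n)
  have hDlim : ∀ᵐ ω ∂μ, Filter.Tendsto (fun n => Dn n ω) Filter.atTop (nhds (D ω)) := by
    filter_upwards [hae] with ω hω
    obtain ⟨p1, _⟩ := PF ω hω (τ ω) (hτ ω)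
    refine tendsto_const_nhds.congr' ?_
    filter_upwards [Filter.eventually_ge_atTop (τ ω)] with n hn
    obtain ⟨a, b, _⟩ := p1 n hn
    simp only [hD, hDn, a, b]
  have hDi : Integrable D μ := by
    refine ⟨aestronglyMeasurable_of_tendsto_ae _ (fun n => (hDni n).1) hDlim, ?_⟩
    have hD0 : ∀ ω, 0 ≤ D ω := fun ω => by simp only [hD]; positivity
    rw [hasFiniteIntegral_iff_ofReal (Filter.Eventually.of_forall hD0)]
    have e : ∫⁻ ω, ENNReal.ofReal (D ω) ∂μ =
        ∫⁻ ω, Filter.liminf (fun n => ENNReal.ofReal (Dn n ω)) Filter.atTop ∂μ := by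
      refine lintegral_congr_ae ?_
      filter_upwards [hDlim] with ω hω
      exact ((ENNReal.continuous_ofReal.tendsto _).comp hω).liminf_eq.symm
    rw [e]
    refine lt_of_le_of_lt (lintegral_liminf_le' fun n => (hDni n).1.aemeasurable.ennreal_ofReal) ?_
    refine lt_of_le_of_lt (Filter.liminf_le_of_frequently_le'
      (x := ENNReal.ofReal (h*(4*h+3)+(4*h+3))) (Filter.Frequently.of_forall fun n => ?_)) ENNReal.ofReal_lt_top
    rw [← ofReal_integral_eq_lintegral_ofReal (hDni n) (Filter.Eventually.of_forall (hDn0 n))]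
    exact ENNReal.ofReal_le_ofReal (hDnb n)
  -- truncated sums
  set An : ℕ → Ω → ℝ := fun n ω =>
    (∑ t ∈ Finset.range n, if w t ω < h then (h:ℝ) - w t ω else 0) + k - w n ω with hAn
  have hAni : ∀ n, Integrable (An n) μ := fun n =>
    ((integrable_finsetSum _ fun t _ => hdi t).add (integrable_const _)).sub (hwi n)
  have hAlow : ∀ n, (h:ℝ) * (h-k)/4 - C * (∫ ω, (if w n ω < h then (1:ℝ) else 0) ∂μ) - (4*h+3)
      ≤ ∫ ω, An n ω ∂μ := by
    intro n
    have i1 : Integrable (fun ω => ∑ t ∈ Finset.range n, if w t ω < h then (h:ℝ) - w t ω else 0) μ :=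
      integrable_finsetSum _ fun t _ => hdi t
    have i2 : Integrable (fun ω => (∑ t ∈ Finset.range n, if w t ω < h then (h:ℝ) - w t ω else 0) + (k:ℝ)) μ :=
      i1.add (integrable_const _)
    have e : ∫ ω, An n ω ∂μ = (∑ t ∈ Finset.range n, ∫ ω, (if w t ω < h then (h:ℝ) - w t ω else 0) ∂μ)
        + k - ∫ ω, (w n ω : ℝ) ∂μ := by
      simp only [hAn]
      rw [integral_sub i2 (hwi n), integral_add i1 (integrable_const _),
        integral_finsetSum _ fun t _ => hdi t]
      simp
    rw [e]
    have := hC n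
    have := hm n
    have : (0:ℝ) ≤ k := by positivity
    linarith
  have hAlim : Filter.Tendsto (fun n => ∫ ω, An n ω ∂μ) Filter.atTop
      (nhds (∫ ω, (∑ t ∈ Finset.Icc 1 (τ ω), ((h : ℝ) - Z t ω)) ∂μ)) := by
    refine tendsto_integral_of_dominated_convergence (fun ω => D ω + (k + h)) (fun n => (hAni n).1)
      (hDi.add (integrable_const _)) (fun n => ?_) ?_
    · filter_upwards [hae] with ω hω
      obtain ⟨_, p2⟩ := PF ω hω (τ ω) (hτ ω)
      obtain ⟨a, b⟩ := p2 n
      have a' : (w n ω : ℝ) ≤ h + Z (τ ω) ω := by exact_mod_cast a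
      have s0 : 0 ≤ ∑ t ∈ Finset.range n, (if w t ω < h then (h:ℝ) - w t ω else 0) :=
        Finset.sum_nonneg fun t _ => by
          split_ifs with hc
          · have : (w t ω : ℝ) ≤ h := by exact_mod_cast hc.le
            linarith
          · exact le_rfl
      have s1 : ∑ t ∈ Finset.range n, (if w t ω < h then (h:ℝ) - w t ω else 0) ≤
          h * ∑ t ∈ Finset.range n, (if w t ω < h then (1:ℝ) else 0) := by
        rw [Finset.mul_sum]
        refine Finset.sum_le_sum fun t _ => ?_
        split_ifs with hc
        · have : (0 : ℝ) ≤ w t ω := by positivity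
          linarith
        · simp
      have s2 := mul_le_mul_of_nonneg_left b (by positivity : (0:ℝ) ≤ h)
      have z0 : (0:ℝ) ≤ Z (τ ω) ω := by positivity
      have k0 : (0:ℝ) ≤ k := by positivity
      have w0 : (0:ℝ) ≤ w n ω := by positivity
      have t0 : (0:ℝ) ≤ h * (τ ω : ℝ) := by positivity
      simp only [hAn, hD, Real.norm_eq_abs]
      rw [abs_le]
      constructor <;> linarith
    · filter_upwards [hae] with ω hω
      obtain ⟨p1, _⟩ := PF ω hω (τ ω) (hτ ω)
      refine tendsto_const_nhds.congr' ?_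
      filter_upwards [Filter.eventually_ge_atTop (τ ω)] with n hn
      exact (p1 n hn).2.2.symm
  have hlow : Filter.Tendsto (fun n => (h:ℝ) * (h-k)/4 -
      C * (∫ ω, (if w n ω < h then (1:ℝ) else 0) ∂μ) - (4*h+3)) Filter.atTop
      (nhds ((h:ℝ) * (h-k)/4 - C * 0 - (4*h+3))) :=
    (tendsto_const_nhds.sub (hPlim.const_mul C)).sub tendsto_const_nhds
  have hfin := le_of_tendsto_of_tendsto' hlow hAlim hAlow
  simp only [← Finset.sum_div]
  rw [integral_div, le_div_iff₀ (by linarith)]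
  refine le_trans ?_ hfin
  have hd : Real.sqrt h ≤ h - k := by linarith
  have := mul_le_mul_of_nonneg_left hd (by linarith : (0:ℝ) ≤ h)
  have := mul_le_mul_of_nonneg_left hs100 (by linarith : (0:ℝ) ≤ h)
  linarith
end

section
/- The process M_t = Σ_{s=1}^t (Z_s − s) − t(Z_t − t), t ∈ ℕ, is a martingale with respect to the natural filtration ℱ_t = σ(Z_0, …, Z_t): for every t, E[M_{t+1} | ℱ_t] = M_t. -/
open MeasureTheory ProbabilityTheory

lemma aux_geom_mean : ∑' j : ℕ, (j : ENNReal) * (1 / 2) ^ (j + 1) = 1 := by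
  have h := (hasSum_coe_mul_geometric_of_norm_lt_one (𝕜 := ℝ) (r := 1/2) (by norm_num)).mul_right (1/2)
  have e : ∀ j : ℕ, (j : ENNReal) * (1 / 2) ^ (j + 1)
      = ENNReal.ofReal ((j : ℝ) * (1 / 2) ^ j * (1 / 2)) := by
    intro j
    rw [mul_assoc, ← pow_succ, ENNReal.ofReal_mul (by positivity), ENNReal.ofReal_natCast,
      ENNReal.ofReal_pow (by positivity), ENNReal.ofReal_div_of_pos (by norm_num)]
    simp
  simp_rw [e]
  rw [← ENNReal.ofReal_tsum_of_nonneg (fun j => by positivity) h.summable, h.tsum_eq]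
  norm_num

lemma aux_lintegral {Ω : Type*} [MeasurableSpace Ω] (μ : Measure Ω) (Y : Ω → ℕ)
    (hY : Measurable Y) (hd : ∀ j, μ {ω | Y ω = j} = (1 / 2) ^ (j + 1)) :
    ∫⁻ ω, (Y ω : ENNReal) ∂μ = 1 := by
  rw [← lintegral_map (f := fun n : ℕ => (n : ENNReal)) (measurable_from_nat) hY,
    lintegral_countable', ← aux_geom_mean]
  congr 1
  ext j
  rw [Measure.map_apply hY (measurableSet_singleton j), ← hd j]
  rfl

lemma aux_ind_sum (n : ℕ) (f : ℕ → ENNReal) :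
    ∑' i, (if i ≤ n then f i else 0) = ∑ i ∈ Finset.range (n + 1), f i := by
  rw [tsum_eq_sum (s := Finset.range (n + 1))]
  · refine Finset.sum_congr rfl fun i hi => ?_
    rw [if_pos (by simpa [Nat.lt_succ_iff] using hi)]
  · intro i hi
    rw [if_neg (by simpa [Nat.lt_succ_iff] using hi)]

lemma aux_meas {Ω : Type*} (X : ℕ → ℕ → Ω → ℕ) (k : ℕ) (Z : ℕ → Ω → ℕ)
    (hZ0 : ∀ ω, Z 0 ω = k)
    (hZrec : ∀ t ω, Z (t + 1) ω = ∑ i ∈ Finset.range (Z t ω + 1), X t i ω)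
    (t s : ℕ) (hs : s ≤ t) :
    Measurable[⨆ p ∈ {p : ℕ × ℕ | p.1 < t},
      MeasurableSpace.comap (X p.1 p.2) (inferInstance : MeasurableSpace ℕ)] (Z s) := by
  induction s with
  | zero =>
    have : Z 0 = fun _ => k := funext hZ0
    rw [this]; exact measurable_const
  | succ s ih =>
    have h1 := ih (by omega)
    let _ : MeasurableSpace Ω := ⨆ p ∈ {p : ℕ × ℕ | p.1 < t},
      MeasurableSpace.comap (X p.1 p.2) (inferInstance : MeasurableSpace ℕ)
    have hX : ∀ i, Measurable (X s i) := by
      intro i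
      rw [measurable_iff_comap_le]
      exact le_iSup₂_of_le (f := fun (p : ℕ × ℕ) (_ : p ∈ {p : ℕ × ℕ | p.1 < t}) =>
        MeasurableSpace.comap (X p.1 p.2) (inferInstance : MeasurableSpace ℕ))
        (s, i) (by simp; omega) le_rfl
    have h2 : Measurable (fun q : ℕ × Ω => ∑ i ∈ Finset.range (q.1 + 1), X s i q.2) := by
      apply measurable_from_prod_countable_right
      intro n
      exact Finset.measurable_sum (Finset.range (n + 1)) (fun i _ => hX i)
    have h3 := h2.comp (h1.prodMk measurable_id)
    have : Z (s + 1) = (fun q : ℕ × Ω => ∑ i ∈ Finset.range (q.1 + 1), X s i q.2) ∘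
        (fun ω => (Z s ω, id ω)) := by
      ext ω; simp [hZrec]
    rw [this]; exact h3

lemma aux_key {Ω : Type*} (G : MeasurableSpace Ω) [mΩ : MeasurableSpace Ω] (hGle : G ≤ mΩ)
    (μ : Measure Ω) (Y : Ω → ℕ) (hY : Measurable Y)
    (hd : ∀ j, μ {ω | Y ω = j} = (1 / 2) ^ (j + 1))
    (hind : Indep G (MeasurableSpace.comap Y inferInstance) μ)
    (A B : Set Ω) (hA : MeasurableSet[G] A) (hB : MeasurableSet[G] B) :
    ∫⁻ ω, (A ∩ B).indicator (fun ω => (Y ω : ENNReal)) ω ∂μ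
      = ∫⁻ ω, (A ∩ B).indicator (fun _ => (1 : ENNReal)) ω ∂μ := by
  have e : ∀ ω, (A ∩ B).indicator (fun ω => (Y ω : ENNReal)) ω
      = (A ∩ B).indicator (fun _ => (1 : ENNReal)) ω * (Y ω : ENNReal) := by
    intro ω
    by_cases h : ω ∈ A ∩ B <;> simp [h]
  simp_rw [e]
  have hf : Measurable[G] ((A ∩ B).indicator (fun _ => (1 : ENNReal))) :=
    Measurable.indicator measurable_const (hA.inter hB)
  have hg : Measurable[MeasurableSpace.comap Y inferInstance] (fun ω => (Y ω : ENNReal)) :=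
    (measurable_from_nat (f := fun n : ℕ => (n : ENNReal))).comp (comap_measurable Y)
  rw [lintegral_mul_eq_lintegral_mul_lintegral_of_independent_measurableSpace hGle
    hY.comap_le hind hf hg, aux_lintegral μ Y hY hd, mul_one]

lemma aux_hs {Ω : Type*} [MeasurableSpace Ω] (μ : Measure Ω) (N : Ω → ℕ) (hN : Measurable N)
    (A : Set Ω) (hA : MeasurableSet A) (f : ℕ → Ω → ENNReal) (hf : ∀ i, Measurable (f i)) :
    ∫⁻ ω in A, ∑ i ∈ Finset.range (N ω + 1), f i ω ∂μ =
      ∑' i, ∫⁻ ω, (A ∩ {ω | i ≤ N ω}).indicator (f i) ω ∂μ := by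
  have hB : ∀ i, MeasurableSet {ω | i ≤ N ω} := fun i => hN (measurableSet_Ici (a := i))
  simp_rw [← aux_ind_sum]
  rw [lintegral_tsum]
  · congr 1
    ext i
    rw [← lintegral_indicator hA]
    congr 1
    ext ω
    by_cases h : ω ∈ A <;> by_cases h' : i ≤ N ω <;> simp [h, h']
  · intro i
    exact (Measurable.ite (hB i) (hf i) measurable_const).aemeasurable

lemma aux_step {Ω : Type*} [mΩ : MeasurableSpace Ω] (μ : Measure Ω) [IsProbabilityMeasure μ]
    (X : ℕ → ℕ → Ω → ℕ) (hXmeas : ∀ t i, Measurable (X t i))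
    (hXindep : iIndepFun (fun p : ℕ × ℕ => X p.1 p.2) μ)
    (hXdist : ∀ t i j, μ {ω | X t i ω = j} = (1 / 2) ^ (j + 1))
    (k : ℕ) (Z : ℕ → Ω → ℕ)
    (hZ0 : ∀ ω, Z 0 ω = k)
    (hZrec : ∀ t ω, Z (t + 1) ω = ∑ i ∈ Finset.range (Z t ω + 1), X t i ω)
    (t : ℕ) (A : Set Ω)
    (hA : MeasurableSet[⨆ p ∈ {p : ℕ × ℕ | p.1 < t},
      MeasurableSpace.comap (X p.1 p.2) (inferInstance : MeasurableSpace ℕ)] A) :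
    ∫⁻ ω in A, (Z (t + 1) ω : ENNReal) ∂μ = ∫⁻ ω in A, ((Z t ω : ENNReal) + 1) ∂μ := by
  have hGle : (⨆ p ∈ {p : ℕ × ℕ | p.1 < t},
      MeasurableSpace.comap (X p.1 p.2) (inferInstance : MeasurableSpace ℕ)) ≤ mΩ :=
    iSup₂_le fun p _ => (hXmeas p.1 p.2).comap_le
  have hZt := aux_meas X k Z hZ0 hZrec t t le_rfl
  have hZm : Measurable (Z t) := hZt.mono hGle le_rfl
  have key : ∀ i, _ := fun i => aux_key _ hGle μ (X t i) (hXmeas t i) (hXdist t i) (by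
    have := indep_iSup_of_disjoint
      (m := fun p : ℕ × ℕ => MeasurableSpace.comap (X p.1 p.2) (inferInstance : MeasurableSpace ℕ))
      (μ := μ) (fun p => (hXmeas p.1 p.2).comap_le) hXindep.iIndep
      (S := {p : ℕ × ℕ | p.1 < t}) (T := {(t, i)}) (by simp)
    simpa using this) A {ω | i ≤ Z t ω} hA (hZt (measurableSet_Ici (a := i)))
  have h1 := aux_hs μ (Z t) hZm A (hGle _ hA) (fun i ω => (X t i ω : ENNReal))
    (fun i => (measurable_from_nat (f := fun n : ℕ => (n : ENNReal))).comp (hXmeas t i))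
  have h2 := aux_hs μ (Z t) hZm A (hGle _ hA) (fun i ω => 1) (fun i => measurable_const)
  simp_rw [key] at h1
  rw [← h2] at h1
  simpa [hZrec] using h1

/-- `M_t = Σ_{s=1}^t (Z_s − s) − t (Z_t − t)` is a martingale for the natural
filtration of `Z`: `E[M_{t+1} | ℱ_t] = M_t` for every `t`. -/
theorem M_is_martingale
    {Ω : Type*} [MeasurableSpace Ω] (μ : Measure Ω) [IsProbabilityMeasure μ]
    -- i.i.d. offspring variables, geometric with mean 1: P(X_{t,i} = j) = 2^{-j-1}
    (X : ℕ → ℕ → Ω → ℕ) (hXmeas : ∀ t i, Measurable (X t i))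
    (hXindep : iIndepFun (fun p : ℕ × ℕ => X p.1 p.2) μ)
    (hXdist : ∀ t i j, μ {ω | X t i ω = j} = (1 / 2) ^ (j + 1))
    -- the critical geometric branching process with one immigrant per generation,
    -- started from k
    (k : ℕ) (Z : ℕ → Ω → ℕ) (hZmeas : ∀ t, Measurable (Z t))
    (hZ0 : ∀ ω, Z 0 ω = k)
    (hZrec : ∀ t ω, Z (t + 1) ω = ∑ i ∈ Finset.range (Z t ω + 1), X t i ω)
    -- the natural filtration of Z
    (F : ℕ → MeasurableSpace Ω)
    (hF : ∀ t, F t = ⨆ s ∈ Finset.range (t + 1), MeasurableSpace.comap (Z s) ⊤)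
    (M : ℕ → Ω → ℝ)
    (hM : ∀ t ω, M t ω =
      (∑ s ∈ Finset.Icc 1 t, ((Z s ω : ℝ) - (s : ℝ))) - (t : ℝ) * ((Z t ω : ℝ) - (t : ℝ))) :
    ∀ t : ℕ, μ[M (t + 1)|F t] =ᵐ[μ] M t := by
  have hFle : ∀ t, F t ≤ ⨆ p ∈ {p : ℕ × ℕ | p.1 < t},
      MeasurableSpace.comap (X p.1 p.2) (inferInstance : MeasurableSpace ℕ) := by
    intro t
    rw [hF]
    refine iSup₂_le fun s hs => ?_
    exact (aux_meas X k Z hZ0 hZrec t s (by simpa [Nat.lt_succ_iff] using hs)).comap_le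
  have hGle : ∀ t, F t ≤ ‹MeasurableSpace Ω› := fun t =>
    (hFle t).trans (iSup₂_le fun p _ => (hXmeas p.1 p.2).comap_le)
  have hstep := aux_step μ X hXmeas hXindep hXdist k Z hZ0 hZrec
  have hZF : ∀ t s, s ≤ t → Measurable[F t] (Z s) := by
    intro t s hs
    rw [measurable_iff_comap_le, hF]
    exact le_iSup₂_of_le (f := fun s (_ : s ∈ Finset.range (t + 1)) =>
      MeasurableSpace.comap (Z s) ⊤) s (by simp; omega) le_rfl
  have hcast : ∀ t s, s ≤ t → Measurable[F t] (fun ω => (Z s ω : ℝ)) := fun t s hs =>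
    (measurable_from_nat (f := fun n : ℕ => (n : ℝ))).comp (hZF t s hs)
  have hcast' : ∀ s, Measurable (fun ω => (Z s ω : ℝ)) := fun s =>
    (measurable_from_nat (f := fun n : ℕ => (n : ℝ))).comp (hZmeas s)
  have hfin : ∀ t, ∫⁻ ω, (Z t ω : ENNReal) ∂μ < ⊤ := by
    intro t
    induction t with
    | zero => simp [hZ0]
    | succ t ih =>
      have h := hstep t Set.univ MeasurableSet.univ
      simp only [Measure.restrict_univ] at h
      rw [h, lintegral_add_right _ measurable_const]
      simpa using ih
  have hZintegrable : ∀ t, Integrable (fun ω => (Z t ω : ℝ)) μ := by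
    intro t
    refine ⟨(hcast' t).aestronglyMeasurable, ?_⟩
    rw [hasFiniteIntegral_iff_enorm]
    simpa [← ofReal_norm] using hfin t
  have hce : ∀ t, (fun ω => (Z t ω : ℝ) + 1) =ᵐ[μ] μ[fun ω => (Z (t + 1) ω : ℝ)|F t] := by
    intro t
    refine ae_eq_condExp_of_forall_setIntegral_eq (hGle t) (hZintegrable (t + 1))
      (fun A _ _ => ((hZintegrable t).add (integrable_const 1)).integrableOn) ?_
      ((hcast t t le_rfl).add measurable_const).stronglyMeasurable.aestronglyMeasurable
    intro A hA _
    rw [integral_eq_lintegral_of_nonneg_ae (Filter.Eventually.of_forall fun ω => by positivity)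
        (show Measurable (fun ω => (Z t ω : ℝ) + 1) from
          (hcast' t).add measurable_const).aestronglyMeasurable,
      integral_eq_lintegral_of_nonneg_ae (Filter.Eventually.of_forall fun ω => by positivity)
        (hcast' (t + 1)).aestronglyMeasurable]
    congr 1
    have h := hstep t A (hFle t A hA)
    have e : ∀ ω, ENNReal.ofReal ((Z t ω : ℝ) + 1) = (Z t ω : ENNReal) + 1 := fun ω => by
      rw [ENNReal.ofReal_add (by positivity) (by positivity)]; simp
    simp_rw [e, ENNReal.ofReal_natCast]
    exact h.symm
  intro t
  have hdecomp : M (t + 1) = (fun ω => M t ω + (t : ℝ) * ((Z t ω : ℝ) + 1))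
      + (-(t : ℝ)) • (fun ω => (Z (t + 1) ω : ℝ)) := by
    ext ω
    simp only [Pi.add_apply, Pi.smul_apply, smul_eq_mul, hM]
    rw [Finset.sum_Icc_succ_top (by omega)]
    push_cast
    ring
  have hMfun : M t = fun ω => (∑ s ∈ Finset.Icc 1 t, ((Z s ω : ℝ) - (s : ℝ)))
      - (t : ℝ) * ((Z t ω : ℝ) - (t : ℝ)) := funext (hM t)
  have hMint : Integrable (M t) μ := by
    rw [hMfun]
    exact (integrable_finsetSum _ fun s _ => (hZintegrable s).sub (integrable_const _)).sub
      (((hZintegrable t).sub (integrable_const _)).const_mul _)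
  have hMmeas : Measurable[F t] (M t) := by
    rw [hMfun]
    exact (Finset.measurable_sum _ fun s hs =>
      (hcast t s (Finset.mem_Icc.1 hs).2).sub measurable_const).sub
      (((hcast t t le_rfl).sub measurable_const).const_mul _)
  have hNint : Integrable (fun ω => M t ω + (t : ℝ) * ((Z t ω : ℝ) + 1)) μ :=
    hMint.add (((hZintegrable t).add (integrable_const 1)).const_mul _)
  have hNmeas : StronglyMeasurable[F t] (fun ω => M t ω + (t : ℝ) * ((Z t ω : ℝ) + 1)) :=
    (hMmeas.add (((hcast t t le_rfl).add measurable_const).const_mul _)).stronglyMeasurable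
  rw [hdecomp]
  have h1 := condExp_add hNint ((hZintegrable (t + 1)).smul (-(t : ℝ))) (F t)
  rw [condExp_of_stronglyMeasurable (hGle t) hNmeas hNint] at h1
  have h2 := condExp_smul (μ := μ) (-(t : ℝ)) (fun ω => (Z (t + 1) ω : ℝ)) (F t)
  filter_upwards [h1, h2, hce t] with ω a b c
  refine a.trans ?_
  rw [Pi.add_apply]
  refine (congrArg _ b).trans ?_
  rw [Pi.smul_apply, ← c, smul_eq_mul]
  ring
end

section
/- The process M'_t = −(1/4) Z_t² + t Z_t − (1/2) t² + (1/4) t, t ∈ ℕ, is a martingale with respect to the natural filtration ℱ_t = σ(Z_0, …, Z_t): for every t, E[M'_{t+1} | ℱ_t] = M'_t. -/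
open MeasureTheory ProbabilityTheory

lemma geomLaw_sum_one : HasSum (fun n : ℕ => (1 - (1/2 : ℝ)) ^ n * (1/2) * (n : ℝ)) 1 := by
  have h := (hasSum_coe_mul_geometric_of_norm_lt_one (r := (1/2 : ℝ)) (by norm_num)).mul_right (1/2)
  convert! h using 1
  · ext n; norm_num; ring
  · norm_num

lemma geomLaw_sum_two : HasSum (fun n : ℕ => (1 - (1/2 : ℝ)) ^ n * (1/2) * (n : ℝ) ^ 2) 3 := by
  have h0 := (hasSum_choose_mul_geometric_of_norm_lt_one 2 (r := (1/2 : ℝ)) (by norm_num))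
  have h1 := (hasSum_coe_mul_geometric_of_norm_lt_one (r := (1/2 : ℝ)) (by norm_num)).mul_right (3/2)
  have h2 := hasSum_geometric_of_norm_lt_one (ξ := (1/2 : ℝ)) (by norm_num)
  convert! (h0.sub (h1.add h2)) using 1
  · ext n
    rw [Nat.cast_choose_two]
    push_cast
    norm_num; ring
  · norm_num

noncomputable def halfI : unitInterval := ⟨1/2, by norm_num, by norm_num⟩

lemma halfI_ne : halfI ≠ 0 := by
  intro h; have := congrArg Subtype.val h; norm_num [halfI] at this

lemma geom_map {Ω : Type*} [MeasurableSpace Ω] (μ : Measure Ω) (Y : Ω → ℕ) (hY : Measurable Y)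
    (hd : ∀ j, μ {ω | Y ω = j} = (1 / 2) ^ (j + 1)) : μ.map Y = geometricMeasure halfI := by
  refine Measure.ext_of_singleton fun n => ?_
  rw [geometricMeasure_singleton halfI_ne, Measure.map_apply hY (measurableSet_singleton n)]
  have : Y ⁻¹' {n} = {ω | Y ω = n} := rfl
  rw [this, hd]
  have : ((1 - (halfI : ℝ)) ^ n * (halfI : ℝ)) = (1/2 : ℝ) ^ (n+1) := by
    simp only [halfI]; norm_num; ring
  rw [this, ENNReal.ofReal_pow (by norm_num), ENNReal.ofReal_div_of_pos (by norm_num)]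
  simp

lemma geom_moments {Ω : Type*} [MeasurableSpace Ω] (μ : Measure Ω) [IsProbabilityMeasure μ]
    (Y : Ω → ℕ) (hY : Measurable Y)
    (hd : ∀ j, μ {ω | Y ω = j} = (1 / 2) ^ (j + 1)) :
    MemLp (fun ω => (Y ω : ℝ)) 2 μ ∧ ∫ ω, (Y ω : ℝ) ∂μ = 1 ∧
      variance (fun ω => (Y ω : ℝ)) μ = 2 := by
  have hm := geom_map μ Y hY hd
  have hL : MemLp (fun ω => (Y ω : ℝ)) 2 μ := by
    rw [memLp_two_iff_integrable_sq (by fun_prop)]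
    have : Integrable (fun n : ℕ => (n : ℝ) ^ 2) (μ.map Y) := by
      rw [hm, integrable_geometricMeasure_iff halfI_ne]
      simpa [halfI] using geomLaw_sum_two.summable
    exact this.comp_measurable hY
  have h1 : ∫ ω, (Y ω : ℝ) ∂μ = 1 := by
    rw [← integral_map (f := fun n : ℕ => (n : ℝ)) hY.aemeasurable (by fun_prop), hm,
      integral_geometricMeasure halfI_ne]
    exact geomLaw_sum_one.tsum_eq
  have h2 : ∫ ω, (Y ω : ℝ) ^ 2 ∂μ = 3 := by
    rw [← integral_map (f := fun n : ℕ => (n : ℝ) ^ 2) hY.aemeasurable (by fun_prop), hm,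
      integral_geometricMeasure halfI_ne]
    exact geomLaw_sum_two.tsum_eq
  refine ⟨hL, h1, ?_⟩
  rw [variance_eq_sub hL, h1]
  simp only [Pi.pow_apply]
  rw [h2]; norm_num

lemma sum_moments {Ω : Type*} [MeasurableSpace Ω] (μ : Measure Ω) [IsProbabilityMeasure μ]
    (X : ℕ → ℕ → Ω → ℕ) (hXmeas : ∀ t i, Measurable (X t i))
    (hXindep : iIndepFun (fun p : ℕ × ℕ => X p.1 p.2) μ)
    (hXdist : ∀ t i j, μ {ω | X t i ω = j} = (1 / 2) ^ (j + 1)) (t n : ℕ) :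
    MemLp (fun ω => ∑ i ∈ Finset.range (n + 1), (X t i ω : ℝ)) 2 μ ∧
    ∫ ω, ∑ i ∈ Finset.range (n + 1), (X t i ω : ℝ) ∂μ = n + 1 ∧
    ∫ ω, (∑ i ∈ Finset.range (n + 1), (X t i ω : ℝ)) ^ 2 ∂μ = (n : ℝ) ^ 2 + 4 * n + 3 := by
  have hg := fun i => geom_moments μ (X t i) (hXmeas t i) (hXdist t i)
  have hL : MemLp (fun ω => ∑ i ∈ Finset.range (n + 1), (X t i ω : ℝ)) 2 μ :=
    memLp_finsetSum _ fun i _ => (hg i).1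
  have h1 : ∫ ω, ∑ i ∈ Finset.range (n + 1), (X t i ω : ℝ) ∂μ = n + 1 := by
    rw [integral_finsetSum _ fun i _ => (hg i).1.integrable (by norm_num)]
    simp [(hg _).2.1]
  have hv : variance (fun ω => ∑ i ∈ Finset.range (n + 1), (X t i ω : ℝ)) μ = 2 * (n + 1) := by
    have := IndepFun.variance_sum (μ := μ) (X := fun i ω => (X t i ω : ℝ))
      (s := Finset.range (n + 1)) (fun i _ => (hg i).1) (by
        intro i _ j _ hij
        exact (hXindep.indepFun (i := (t, i)) (j := (t, j)) (by simpa using hij)).comp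
          (φ := fun m : ℕ => (m : ℝ)) (ψ := fun m : ℕ => (m : ℝ)) (by fun_prop) (by fun_prop))
    rw [← Finset.sum_fn, this]
    simp [(hg _).2.2]; ring
  refine ⟨hL, h1, ?_⟩
  rw [variance_eq_sub hL, h1] at hv
  simp only [Pi.pow_apply] at hv
  linarith

lemma Z_meas_past {Ω : Type*} 
    (X : ℕ → ℕ → Ω → ℕ) (k : ℕ) (Z : ℕ → Ω → ℕ)
    (hZ0 : ∀ ω, Z 0 ω = k)
    (hZrec : ∀ t ω, Z (t + 1) ω = ∑ i ∈ Finset.range (Z t ω + 1), X t i ω) (t : ℕ) :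
    ∀ s ≤ t, Measurable[⨆ p ∈ {p : ℕ × ℕ | p.1 < t},
      MeasurableSpace.comap (X p.1 p.2) ⊤] (Z s) := by
  letI m : MeasurableSpace Ω := ⨆ p ∈ {p : ℕ × ℕ | p.1 < t},
      MeasurableSpace.comap (X p.1 p.2) ⊤
  intro s
  induction s with
  | zero => intro _; rw [show Z 0 = fun _ => k from funext hZ0]; exact measurable_const
  | succ s ih =>
    intro hs
    have hX : ∀ i, Measurable (X s i) := fun i =>
      Measurable.of_comap_le (le_biSup (fun p : ℕ × ℕ => MeasurableSpace.comap (X p.1 p.2) ⊤)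
        (show (s, i) ∈ {p : ℕ × ℕ | p.1 < t} from hs))
    have h2 : ∀ n, Measurable (fun ω => ∑ i ∈ Finset.range (n + 1), X s i ω) := by
      intro n; fun_prop
    rw [show Z (s+1) = fun ω => ∑ i ∈ Finset.range (Z s ω + 1), X s i ω from funext (hZrec s)]
    exact (measurable_from_prod_countable_right
      (f := fun q : ℕ × Ω => ∑ i ∈ Finset.range (q.1 + 1), X s i q.2) h2).comp
      ((ih (by omega)).prodMk measurable_id)




/-- `M'_t = −(1/4) Z_t² + t Z_t − (1/2) t² + (1/4) t` is a martingale for the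
natural filtration of `Z`: `E[M'_{t+1} | ℱ_t] = M'_t` for every `t`. -/
theorem M'_is_martingale
    {Ω : Type*} [MeasurableSpace Ω] (μ : Measure Ω) [IsProbabilityMeasure μ]
    -- i.i.d. offspring variables, geometric with mean 1: P(X_{t,i} = j) = 2^{-j-1}
    (X : ℕ → ℕ → Ω → ℕ) (hXmeas : ∀ t i, Measurable (X t i))
    (hXindep : iIndepFun (fun p : ℕ × ℕ => X p.1 p.2) μ)
    (hXdist : ∀ t i j, μ {ω | X t i ω = j} = (1 / 2) ^ (j + 1))
    -- the critical geometric branching process with one immigrant per generation,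
    -- started from k
    (k : ℕ) (Z : ℕ → Ω → ℕ) (hZmeas : ∀ t, Measurable (Z t))
    (hZ0 : ∀ ω, Z 0 ω = k)
    (hZrec : ∀ t ω, Z (t + 1) ω = ∑ i ∈ Finset.range (Z t ω + 1), X t i ω)
    -- the natural filtration of Z
    (F : ℕ → MeasurableSpace Ω)
    (hF : ∀ t, F t = ⨆ s ∈ Finset.range (t + 1), MeasurableSpace.comap (Z s) ⊤)
    (M' : ℕ → Ω → ℝ)
    (hM' : ∀ t ω, M' t ω =
      -(1 / 4) * (Z t ω : ℝ) ^ 2 + (t : ℝ) * (Z t ω : ℝ)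
        - (1 / 2) * (t : ℝ) ^ 2 + (1 / 4) * (t : ℝ)) :
    ∀ t : ℕ, μ[M' (t + 1)|F t] =ᵐ[μ] M' t := by
  intro t
  set Y : ℕ → ℕ → Ω → ℝ := fun t n ω => ∑ i ∈ Finset.range (n + 1), (X t i ω : ℝ) with hY
  have hmom := sum_moments μ X hXmeas hXindep hXdist
  have hZY : ∀ t n ω, Z t ω = n → (Z (t + 1) ω : ℝ) = Y t n ω := by
    intro t n ω h; rw [hZrec, h]; simp [hY]
  have hFle : ∀ t, F t ≤ ‹MeasurableSpace Ω› := by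
    intro t; rw [hF]; exact iSup₂_le fun s _ => (hZmeas s).comap_le
  have hZF : ∀ t, Measurable[F t] (Z t) := by
    intro t; rw [hF]
    exact Measurable.of_comap_le (le_biSup (fun s => MeasurableSpace.comap (Z s) ⊤)
      (Finset.self_mem_range_succ t))
  let fut : ℕ → MeasurableSpace Ω := fun t => ⨆ p ∈ {p : ℕ × ℕ | p.1 = t},
      MeasurableSpace.comap (X p.1 p.2) ⊤
  have hfle : ∀ t, fut t ≤ ‹MeasurableSpace Ω› := fun t =>
    iSup₂_le fun p _ => (hXmeas p.1 p.2).comap_le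
  have hind : ∀ t, Indep (fut t) (F t) μ := by
    intro t
    have h := indep_iSup_of_disjoint (fun p : ℕ × ℕ => (hXmeas p.1 p.2).comap_le)
      ((iIndepFun_iff_iIndep _ _ _).1 hXindep)
      (S := {p : ℕ × ℕ | p.1 = t}) (T := {p : ℕ × ℕ | p.1 < t})
      (by rw [Set.disjoint_left]; intro p hp hq; simp at hp hq; omega)
    refine indep_of_indep_of_le_right h ?_
    rw [hF]
    refine iSup₂_le fun s hs => ?_
    exact (Z_meas_past X k Z hZ0 hZrec t s (by simp at hs; omega)).comap_le
  have hYm : ∀ t n, Measurable[fut t] (Y t n) := by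
    intro t n
    have : ∀ i, Measurable[fut t] (X t i) := fun i =>
      Measurable.of_comap_le (le_biSup (fun p : ℕ × ℕ => MeasurableSpace.comap (X p.1 p.2) ⊤)
        (show (t, i) ∈ {p : ℕ × ℕ | p.1 = t} from rfl))
    letI := fut t
    fun_prop
  -- square integrability
  have hdec : ∀ (t : ℕ) (f : ℕ → Ω → ENNReal) (ω : Ω),
      f (Z t ω) ω = ∑' n, ({ω | Z t ω = n}.indicator 1 ω) * f n ω := by
    intro t f ω
    rw [tsum_eq_single (Z t ω)]
    · simp
    · intro n hn
      simp [hn.symm]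
  have hsq : ∀ t, MemLp (fun ω => (Z t ω : ℝ)) 2 μ := by
    intro t
    induction t with
    | zero => simp only [hZ0]; exact memLp_const _
    | succ t ih =>
      have ih1 : Integrable (fun ω => (Z t ω : ℝ)) μ := ih.integrable (by norm_num)
      have ih2 : Integrable (fun ω => (Z t ω : ℝ) ^ 2 + 4 * (Z t ω : ℝ) + 3) μ :=
        (ih.integrable_sq.add (ih1.const_mul 4)).add (integrable_const 3)
      have hmeas := hZmeas (t + 1)
      have hmeas0 := hZmeas t
      rw [memLp_two_iff_integrable_sq (by fun_prop)]
      have hset : ∀ n, MeasurableSet[F t] {ω | Z t ω = n} := fun n =>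
        hZF t (measurableSet_singleton n)
      have hind1 : ∀ n, Measurable[F t] ({ω | Z t ω = n}.indicator (1 : Ω → ENNReal)) := fun n =>
        (show Measurable[F t] (1 : Ω → ENNReal) from @measurable_const _ _ _ (F t) 1).indicator (hset n)
      refine ⟨by fun_prop, ?_⟩
      rw [hasFiniteIntegral_iff_ofReal (ae_of_all _ fun ω => by positivity)]
      have e1 : ∫⁻ ω, ENNReal.ofReal ((Z (t+1) ω : ℝ) ^ 2) ∂μ =
          ∫⁻ ω, ENNReal.ofReal ((Z t ω : ℝ) ^ 2 + 4 * (Z t ω : ℝ) + 3) ∂μ := by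
        calc _ = ∫⁻ ω, ∑' n, ({ω | Z t ω = n}.indicator 1 ω) *
                  ENNReal.ofReal ((Y t n ω) ^ 2) ∂μ := by
                refine lintegral_congr fun ω => ?_
                rw [← hdec t (fun n ω => ENNReal.ofReal ((Y t n ω) ^ 2)) ω, hZY t _ ω rfl]
          _ = ∑' n, ∫⁻ ω, ({ω | Z t ω = n}.indicator 1 ω) *
                  ENNReal.ofReal ((Y t n ω) ^ 2) ∂μ := by
                refine lintegral_tsum fun n => ?_
                have a := (hind1 n).mono (hFle t) le_rfl
                have b := (hYm t n).mono (hfle t) le_rfl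
                fun_prop
          _ = ∑' n, ∫⁻ ω, ({ω | Z t ω = n}.indicator 1 ω) *
                  ENNReal.ofReal ((n : ℝ) ^ 2 + 4 * n + 3) ∂μ := by
                refine tsum_congr fun n => ?_
                have b := hYm t n
                rw [lintegral_mul_eq_lintegral_mul_lintegral_of_independent_measurableSpace
                  (hFle t) (hfle t) (hind t).symm (hind1 n) (by letI := fut t; fun_prop),
                  lintegral_mul_const _ ((hind1 n).mono (hFle t) le_rfl),
                  ← ofReal_integral_eq_lintegral_ofReal (hmom t n).1.integrable_sq
                    (ae_of_all _ fun ω => by positivity), (hmom t n).2.2]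
          _ = ∫⁻ ω, ∑' n, ({ω | Z t ω = n}.indicator 1 ω) *
                  ENNReal.ofReal ((n : ℝ) ^ 2 + 4 * n + 3) ∂μ := by
                refine (lintegral_tsum fun n => ?_).symm
                have a := (hind1 n).mono (hFle t) le_rfl
                fun_prop
          _ = _ := by
                refine lintegral_congr fun ω => ?_
                rw [← hdec t (fun n ω => ENNReal.ofReal ((n : ℝ) ^ 2 + 4 * n + 3)) ω]
      rw [e1]
      exact (hasFiniteIntegral_iff_ofReal (ae_of_all _ fun ω => by positivity)).1 ih2.2
  have hMint : Integrable (M' (t + 1)) μ := by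
    rw [show M' (t+1) = _ from funext (hM' (t+1))]
    have h1 := (hsq (t+1)).integrable (q := 2) (by norm_num)
    have h2 := (hsq (t+1)).integrable_sq
    exact (((h2.const_mul _).add (h1.const_mul _)).sub (integrable_const _)).add
      (integrable_const _)
  let g : ℕ → Ω → ℝ := fun n ω => -(1 / 4) * (Y t n ω) ^ 2 + ((t + 1 : ℕ) : ℝ) * (Y t n ω)
        - (1 / 2) * ((t + 1 : ℕ) : ℝ) ^ 2 + (1 / 4) * ((t + 1 : ℕ) : ℝ)
  have hYi : ∀ n, Integrable (Y t n) μ := fun n => (hmom t n).1.integrable (by norm_num)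
  have hYi2 : ∀ n, Integrable (fun ω => Y t n ω ^ 2) μ := fun n => (hmom t n).1.integrable_sq
  have hgint : ∀ n, Integrable (g n) μ := fun n =>
    ((((hYi2 n).const_mul _).add ((hYi n).const_mul _)).sub (integrable_const _)).add
      (integrable_const _)
  have hgval : ∀ n : ℕ, ∫ ω, g n ω ∂μ = -(1 / 4) * (n : ℝ) ^ 2 + (t : ℝ) * (n : ℝ)
        - (1 / 2) * (t : ℝ) ^ 2 + (1 / 4) * (t : ℝ) := by
    intro n
    have i1 := (hYi2 n).const_mul (-(1/4))
    have i2 := (hYi n).const_mul ((t + 1 : ℕ) : ℝ)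
    have i3 : Integrable (fun ω => -(1 / 4) * (Y t n ω) ^ 2 + ((t + 1 : ℕ) : ℝ) * (Y t n ω)) μ :=
      i1.add i2
    have i4 : Integrable (fun ω => -(1 / 4) * (Y t n ω) ^ 2 + ((t + 1 : ℕ) : ℝ) * (Y t n ω)
        - (1 / 2) * ((t + 1 : ℕ) : ℝ) ^ 2) μ := i3.sub (integrable_const _)
    simp only [g]
    rw [integral_add i4 (integrable_const _),
      integral_sub i3 (integrable_const _), integral_add i1 i2,
      integral_const_mul, integral_const_mul, (hmom t n).2.2, (hmom t n).2.1]
    simp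
    ring
  have key : ∀ n : ℕ, ∀ᵐ ω ∂μ, Z t ω = n → (μ[M' (t + 1)|F t]) ω = M' t ω := by
    intro n
    have hs : MeasurableSet[F t] {ω | Z t ω = n} := hZF t (measurableSet_singleton n)
    have e : {ω | Z t ω = n}.indicator (M' (t + 1)) = {ω | Z t ω = n}.indicator (g n) := by
      refine Set.indicator_congr fun ω hω => ?_
      rw [hM', hZY t n ω hω]
    have c1 := condExp_indicator hMint hs
    have c2 := condExp_indicator (hgint n) hs
    have c3 := condExp_indep_eq (f := g n) (hfle t) (hFle t) (by
      have := hYm t n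
      letI := fut t
      exact Measurable.stronglyMeasurable (by fun_prop)) (hind t)
    rw [e] at c1
    filter_upwards [c1, c2, c3] with ω h1 h2 h3 hω
    rw [h1] at h2
    have hmem : ω ∈ {ω | Z t ω = n} := hω
    rw [Set.indicator_of_mem hmem, Set.indicator_of_mem hmem, h3, hgval] at h2
    rw [h2, hM', hω]
  filter_upwards [ae_all_iff.2 key] with ω h using h _ rfl
end

section
/- For every h ≥ 1 and initial value Z_0 = k with 0 ≤ k < h, the optional stopping identity E[ τ_h Z_{τ_h} − (1/2) τ_h² ] = (1/4) E[Z_{τ_h}²] − (1/4) k² − (1/4) E[τ_h] holds. -/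
open MeasureTheory ProbabilityTheory

/-- Integrals of functions of a geometric variable, from a convergent series. -/
lemma geom_integral {Ω : Type*} [MeasurableSpace Ω] (μ : Measure Ω)
    (Y : Ω → ℕ) (hY : Measurable Y) (hd : ∀ j, μ {ω | Y ω = j} = (1 / 2) ^ (j + 1))
    (f : ℕ → ℝ) (hf : ∀ j, 0 ≤ f j) (s : ℝ) (hs : HasSum (fun j => (1 / 2 : ℝ) ^ (j + 1) * f j) s) :
    Integrable (fun ω => f (Y ω)) μ ∧ ∫ ω, f (Y ω) ∂μ = s := by
  have hm : ∀ j, μ.map Y {j} = (1 / 2) ^ (j + 1) := by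
    intro j
    rw [Measure.map_apply hY (measurableSet_singleton j)]
    exact hd j
  have hmap : μ.map Y = Measure.sum (fun j : ℕ => ((1 / 2 : ENNReal) ^ (j + 1)) • Measure.dirac j) := by
    rw [← Measure.sum_smul_dirac (μ.map Y)]
    simp only [hm]
  have hreal : ∀ j : ℕ, ((1 / 2 : ENNReal) ^ (j + 1)).toReal = (1 / 2 : ℝ) ^ (j + 1) := by
    intro j
    simp
  have hi : Integrable f (μ.map Y) := by
    rw [hmap]
    apply integrable_sum_dirac
    · intro i
      exact ENNReal.pow_ne_top (by simp)
    · simp only [hreal]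
      refine hs.summable.congr fun j => ?_
      rw [Real.norm_of_nonneg (hf j)]
  have hae : AEStronglyMeasurable f (μ.map Y) := hi.aestronglyMeasurable
  refine ⟨(integrable_map_measure hae hY.aemeasurable).1 hi, ?_⟩
  rw [← integral_map hY.aemeasurable hae, integral_countable hi, ← hs.tsum_eq]
  refine tsum_congr fun j => ?_
  rw [measureReal_def, hm, hreal, smul_eq_mul]

lemma halfgeom_sum_one : HasSum (fun j : ℕ => (1 / 2 : ℝ) ^ (j + 1) * (j : ℝ)) 1 := by
  have h := (hasSum_coe_mul_geometric_of_norm_lt_one (r := (1 / 2 : ℝ)) (by norm_num)).mul_left (1 / 2)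
  convert! h using 1
  · funext j; ring
  · norm_num

lemma halfgeom_sum_two : HasSum (fun j : ℕ => (1 / 2 : ℝ) ^ (j + 1) * (j : ℝ) ^ 2) 3 := by
  have h2 := hasSum_choose_mul_geometric_of_norm_lt_one 2 (r := (1 / 2 : ℝ)) (by norm_num)
  have h1 := hasSum_coe_mul_geometric_of_norm_lt_one (r := (1 / 2 : ℝ)) (by norm_num)
  have h0 := hasSum_choose_mul_geometric_of_norm_lt_one 0 (r := (1 / 2 : ℝ)) (by norm_num)
  have h := (h2.sub ((h1.mul_left (3 / 2)).add h0))
  convert! h using 1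
  · funext j
    rw [Nat.cast_choose_two]
    push_cast
    simp
    ring
  · norm_num

/-- First two moments of a sum of independent geometric variables. -/
lemma geom_block {Ω : Type*} [MeasurableSpace Ω] (μ : Measure Ω) [IsProbabilityMeasure μ]
    (Y : ℕ → Ω → ℕ) (hY : ∀ i, Measurable (Y i))
    (hind : Pairwise fun i j => IndepFun (Y i) (Y j) μ)
    (hd : ∀ i j, μ {ω | Y i ω = j} = (1 / 2) ^ (j + 1)) (m : ℕ) :
    Integrable (fun ω => ((∑ i ∈ Finset.range m, Y i ω : ℕ) : ℝ)) μ ∧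
    Integrable (fun ω => ((∑ i ∈ Finset.range m, Y i ω : ℕ) : ℝ) ^ 2) μ ∧
    ∫ ω, ((∑ i ∈ Finset.range m, Y i ω : ℕ) : ℝ) ∂μ = m ∧
    ∫ ω, ((∑ i ∈ Finset.range m, Y i ω : ℕ) : ℝ) ^ 2 ∂μ = 2 * m + (m : ℝ) ^ 2 := by
  set W : ℕ → Ω → ℝ := fun i ω => (Y i ω : ℝ) with hW
  have hWm : ∀ i, Measurable (W i) := fun i => measurable_from_top.comp (hY i)
  have m1 : ∀ i, Integrable (W i) μ ∧ ∫ ω, W i ω ∂μ = 1 := fun i =>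
    geom_integral μ (Y i) (hY i) (hd i) (fun j => (j : ℝ)) (fun j => by positivity) 1 halfgeom_sum_one
  have m2 : ∀ i, Integrable (fun ω => W i ω ^ 2) μ ∧ ∫ ω, W i ω ^ 2 ∂μ = 3 := fun i =>
    geom_integral μ (Y i) (hY i) (hd i) (fun j => (j : ℝ) ^ 2) (fun j => by positivity) 3 halfgeom_sum_two
  have hL : ∀ i, MemLp (W i) 2 μ := fun i =>
    (memLp_two_iff_integrable_sq (hWm i).aestronglyMeasurable).2 (m2 i).1
  have hvar : ∀ i, variance (W i) μ = 2 := by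
    intro i
    rw [variance_eq_sub (hL i)]
    have e : ∫ ω, (W i ^ 2) ω ∂μ = 3 := (m2 i).2
    rw [e, (m1 i).2]
    norm_num
  have hcast : (fun ω => ((∑ i ∈ Finset.range m, Y i ω : ℕ) : ℝ)) = ∑ i ∈ Finset.range m, W i := by
    ext ω
    simp [hW, Finset.sum_apply]
  have hLS : MemLp (∑ i ∈ Finset.range m, W i) 2 μ := memLp_finsetSum' _ fun i _ => hL i
  have hvs : variance (∑ i ∈ Finset.range m, W i) μ = 2 * m := by
    rw [IndepFun.variance_sum (fun i _ => hL i)]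
    · simp [hvar, mul_comm]
    · intro i _ j _ hij
      exact (hind hij).comp (measurable_from_top (f := fun n : ℕ => (n : ℝ)))
        (measurable_from_top (f := fun n : ℕ => (n : ℝ)))
  have hes : ∫ ω, (∑ i ∈ Finset.range m, W i) ω ∂μ = m := by
    simp only [Finset.sum_apply]
    rw [integral_finsetSum _ fun i _ => (m1 i).1]
    simp [(m1 _).2]
  have hsq : ∫ ω, ((∑ i ∈ Finset.range m, W i) ^ 2) ω ∂μ = 2 * m + (m : ℝ) ^ 2 := by
    have := variance_eq_sub hLS
    rw [hvs, hes] at this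
    linarith
  have hc : ∀ ω, ((∑ i ∈ Finset.range m, Y i ω : ℕ) : ℝ) = (∑ i ∈ Finset.range m, W i) ω :=
    fun ω => congrFun hcast ω
  simp only [hc]
  exact ⟨hLS.integrable one_le_two, hLS.integrable_sq, hes, hsq⟩

/-- The space-time polynomial that is harmonic for the process. -/
noncomputable def harmF (t z : ℕ) : ℝ :=
  (t : ℝ) * z - (1 / 2) * (t : ℝ) ^ 2 - (1 / 4) * (z : ℝ) ^ 2 + (1 / 4) * t

lemma step_zero
    {Ω : Type*} [MeasurableSpace Ω] (μ : Measure Ω) [IsProbabilityMeasure μ]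
    (X : ℕ → ℕ → Ω → ℕ) (hXmeas : ∀ t i, Measurable (X t i))
    (hXindep : iIndepFun (fun p : ℕ × ℕ => X p.1 p.2) μ)
    (hXdist : ∀ t i j, μ {ω | X t i ω = j} = (1 / 2) ^ (j + 1))
    (k : ℕ) (Z : ℕ → Ω → ℕ)
    (hZ0 : ∀ ω, Z 0 ω = k)
    (hZrec : ∀ t ω, Z (t + 1) ω = ∑ i ∈ Finset.range (Z t ω + 1), X t i ω)
    (h n z : ℕ) :
    Integrable (fun ω => ({ω | (∀ s ≤ n, Z s ω < h) ∧ Z n ω = z}.indicator (fun _ => (1 : ℝ)) ω) *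
      (harmF (n + 1) (∑ i ∈ Finset.range (z + 1), X n i ω) - harmF n z)) μ ∧
    ∫ ω, ({ω | (∀ s ≤ n, Z s ω < h) ∧ Z n ω = z}.indicator (fun _ => (1 : ℝ)) ω) *
      (harmF (n + 1) (∑ i ∈ Finset.range (z + 1), X n i ω) - harmF n z) ∂μ = 0 := by
  set M : ℕ × ℕ → MeasurableSpace Ω := fun p => MeasurableSpace.comap (X p.1 p.2) ⊤ with hM
  have hMle : ∀ p, M p ≤ (inferInstance : MeasurableSpace Ω) := fun p =>
    (hXmeas p.1 p.2).comap_le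
  have hI : Indep (⨆ p ∈ {p : ℕ × ℕ | p.1 < n}, M p) (⨆ p ∈ {p : ℕ × ℕ | p.1 = n}, M p) μ := by
    refine indep_iSup_of_disjoint hMle hXindep.iIndep ?_
    rw [Set.disjoint_left]
    intro p hp hq
    simp only [Set.mem_ofPred_eq] at hp hq
    omega
  have hXM : ∀ (S : Set (ℕ × ℕ)) t i, (t, i) ∈ S → Measurable[⨆ p ∈ S, M p] (X t i) := by
    intro S t i hS
    have h1 : Measurable[M (t, i)] (X t i) := comap_measurable _
    exact h1.mono (le_iSup₂_of_le (t, i) hS le_rfl) le_rfl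
  have hZM : ∀ s, s ≤ n → Measurable[⨆ p ∈ {p : ℕ × ℕ | p.1 < n}, M p] (Z s) := by
    intro s
    induction s with
    | zero =>
      intro _
      have : Z 0 = fun _ => k := funext hZ0
      rw [this]
      exact measurable_const
    | succ s ih =>
      intro hs
      have hz := ih (by omega)
      have hsum : ∀ m : ℕ, Measurable[⨆ p ∈ {p : ℕ × ℕ | p.1 < n}, M p]
          (fun ω => ∑ i ∈ Finset.range m, X s i ω) := by
        intro m
        refine Finset.measurable_sum _ fun i _ => hXM _ s i ?_
        simp only [Set.mem_ofPred_eq]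
        omega
      have hu : ∀ y : ℕ, MeasurableSet[⨆ p ∈ {p : ℕ × ℕ | p.1 < n}, M p] (Z (s + 1) ⁻¹' {y}) := by
        intro y
        have : Z (s + 1) ⁻¹' {y} = ⋃ m : ℕ, (Z s ⁻¹' {m}) ∩
            ((fun ω => ∑ i ∈ Finset.range (m + 1), X s i ω) ⁻¹' {y}) := by
          ext ω
          simp [hZrec]
        rw [this]
        exact MeasurableSet.iUnion fun m => (hz (measurableSet_singleton m)).inter
          (hsum _ (measurableSet_singleton y))
      letI := (⨆ p ∈ {p : ℕ × ℕ | p.1 < n}, M p)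
      exact measurable_to_countable' hu
  have hA : MeasurableSet[⨆ p ∈ {p : ℕ × ℕ | p.1 < n}, M p]
      {ω | (∀ s ≤ n, Z s ω < h) ∧ Z n ω = z} := by
    have : {ω | (∀ s ≤ n, Z s ω < h) ∧ Z n ω = z} =
        (⋂ s : ℕ, ⋂ _ : s ≤ n, Z s ⁻¹' (Set.Iio h)) ∩ (Z n ⁻¹' {z}) := by
      ext ω
      simp
    rw [this]
    exact (MeasurableSet.iInter fun s => MeasurableSet.iInter fun hs =>
      hZM s hs measurableSet_Iio).inter (hZM n le_rfl (measurableSet_singleton z))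
  set A := {ω | (∀ s ≤ n, Z s ω < h) ∧ Z n ω = z} with hAdef
  have hA' : MeasurableSet A := (iSup₂_le fun p _ => hMle p) A hA
  have hG : Measurable[⨆ p ∈ {p : ℕ × ℕ | p.1 = n}, M p]
      (fun ω => harmF (n + 1) (∑ i ∈ Finset.range (z + 1), X n i ω) - harmF n z) := by
    have h1 : Measurable[⨆ p ∈ {p : ℕ × ℕ | p.1 = n}, M p]
        (fun ω => ∑ i ∈ Finset.range (z + 1), X n i ω) :=
      Finset.measurable_sum _ fun i _ => hXM _ n i rfl
    exact (measurable_from_top (f := fun y : ℕ => harmF (n + 1) y - harmF n z)).comp h1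
  have hIF : IndepFun (A.indicator (fun _ => (1 : ℝ)))
      (fun ω => harmF (n + 1) (∑ i ∈ Finset.range (z + 1), X n i ω) - harmF n z) μ := by
    rw [IndepFun_iff_Indep]
    refine indep_of_indep_of_le_left (indep_of_indep_of_le_right hI hG.comap_le) ?_
    have : Measurable[⨆ p ∈ {p : ℕ × ℕ | p.1 < n}, M p] (A.indicator (fun _ => (1 : ℝ))) :=
      measurable_const.indicator hA
    exact this.comap_le
  obtain ⟨b1, b2, b3, b4⟩ := geom_block μ (X n) (hXmeas n)
    (fun i j hij => hXindep.indepFun (i := (n, i)) (j := (n, j)) (by simpa using hij))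
    (hXdist n) (z + 1)
  have hGi : Integrable
      (fun ω => harmF (n + 1) (∑ i ∈ Finset.range (z + 1), X n i ω) - harmF n z) μ := by
    unfold harmF
    exact (((((b1.const_mul _).sub (integrable_const _)).sub (b2.const_mul _)).add
      (integrable_const _))).sub (integrable_const _)
  have hG0 : ∫ ω, (harmF (n + 1) (∑ i ∈ Finset.range (z + 1), X n i ω) - harmF n z) ∂μ = 0 := by
    have e : ∀ ω, harmF (n + 1) (∑ i ∈ Finset.range (z + 1), X n i ω) - harmF n z =
        ((n + 1 : ℕ) : ℝ) * ((∑ i ∈ Finset.range (z + 1), X n i ω : ℕ) : ℝ) -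
        (1 / 4) * ((∑ i ∈ Finset.range (z + 1), X n i ω : ℕ) : ℝ) ^ 2 +
        (- (1 / 2) * ((n + 1 : ℕ) : ℝ) ^ 2 + (1 / 4) * ((n + 1 : ℕ) : ℝ) - harmF n z) := by
      intro ω
      simp only [harmF]
      ring
    simp only [e]
    have hb : Integrable (fun ω =>
        ((n + 1 : ℕ) : ℝ) * ((∑ i ∈ Finset.range (z + 1), X n i ω : ℕ) : ℝ) -
        (1 / 4) * ((∑ i ∈ Finset.range (z + 1), X n i ω : ℕ) : ℝ) ^ 2) μ :=
      (b1.const_mul _).sub (b2.const_mul _)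
    rw [integral_add hb (integrable_const _),
      integral_sub (b1.const_mul _) (b2.const_mul _), integral_const_mul, integral_const_mul,
      b3, b4, integral_const]
    simp [harmF]
    ring
  have hAi : Integrable (A.indicator (fun _ => (1 : ℝ))) μ := (integrable_const _).indicator hA'
  refine ⟨hIF.integrable_mul hAi hGi, ?_⟩
  rw [hIF.integral_fun_mul_eq_mul_integral hAi.aestronglyMeasurable hGi.aestronglyMeasurable, hG0,
    mul_zero]

/-- For `h ≥ 1` and `Z_0 = k` with `0 ≤ k < h`, the optional stopping
identity `E[τ_h Z_{τ_h} − (1/2) τ_h²] = (1/4) E[Z_{τ_h}²] − (1/4) k² − (1/4) E[τ_h]` holds. -/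
theorem optional_stopping_identity
    {Ω : Type*} [MeasurableSpace Ω] (μ : Measure Ω) [IsProbabilityMeasure μ]
    -- i.i.d. offspring variables, geometric with mean 1: P(X_{t,i} = j) = 2^{-j-1}
    (X : ℕ → ℕ → Ω → ℕ) (hXmeas : ∀ t i, Measurable (X t i))
    (hXindep : iIndepFun (fun p : ℕ × ℕ => X p.1 p.2) μ)
    (hXdist : ∀ t i j, μ {ω | X t i ω = j} = (1 / 2) ^ (j + 1))
    -- the critical geometric branching process with one immigrant per generation,
    -- started from k
    (k : ℕ) (Z : ℕ → Ω → ℕ) (hZmeas : ∀ t, Measurable (Z t))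
    (hZ0 : ∀ ω, Z 0 ω = k)
    (hZrec : ∀ t ω, Z (t + 1) ω = ∑ i ∈ Finset.range (Z t ω + 1), X t i ω)
    -- the first hitting time of [h, ∞)
    (h : ℕ) (τ : Ω → ℕ) (hτ : ∀ ω, τ ω = sInf {t : ℕ | h ≤ Z t ω})
    (hh : 1 ≤ h) (hkh : k < h)
    -- τ_h is almost surely finite and all quantities appearing are integrable
    (hfin : ∀ᵐ ω ∂μ, ∃ t, h ≤ Z t ω)
    (hint1 : Integrable (fun ω => (τ ω : ℝ) * (Z (τ ω) ω : ℝ) - (1 / 2) * (τ ω : ℝ) ^ 2) μ)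
    (hint2 : Integrable (fun ω => (Z (τ ω) ω : ℝ) ^ 2) μ)
    (hint3 : Integrable (fun ω => (τ ω : ℝ)) μ) :
    ∫ ω, ((τ ω : ℝ) * (Z (τ ω) ω : ℝ) - (1 / 2) * (τ ω : ℝ) ^ 2) ∂μ
      = (1 / 4) * ∫ ω, (Z (τ ω) ω : ℝ) ^ 2 ∂μ - (1 / 4) * (k : ℝ) ^ 2
        - (1 / 4) * ∫ ω, (τ ω : ℝ) ∂μ := by
  classical
  set D : ℕ → Ω → ℝ := fun n ω => ∑ z ∈ Finset.range h,
    ({ω | (∀ s ≤ n, Z s ω < h) ∧ Z n ω = z}.indicator (fun _ => (1 : ℝ)) ω) *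
      (harmF (n + 1) (∑ i ∈ Finset.range (z + 1), X n i ω) - harmF n z) with hD
  have hstep := step_zero μ X hXmeas hXindep hXdist k Z hZ0 hZrec h
  have hDi : ∀ n, Integrable (D n) μ := fun n => integrable_finsetSum _ fun z _ => (hstep n z).1
  have hD0 : ∀ n, ∫ ω, D n ω ∂μ = 0 := by
    intro n
    simp only [hD]
    rw [integral_finsetSum _ fun z _ => (hstep n z).1]
    exact Finset.sum_eq_zero fun z _ => (hstep n z).2
  have hDeq : ∀ n ω, D n ω = if (∀ s ≤ n, Z s ω < h) then
      harmF (n + 1) (Z (n + 1) ω) - harmF n (Z n ω) else 0 := by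
    intro n ω
    simp only [hD]
    split_ifs with hc
    · rw [Finset.sum_eq_single (Z n ω)]
      · rw [Set.indicator_of_mem (by exact ⟨hc, rfl⟩), one_mul, hZrec n ω]
      · intro z _ hz
        rw [Set.indicator_of_notMem (by rintro ⟨_, h2⟩; exact hz h2.symm), zero_mul]
      · intro hz
        exact absurd (Finset.mem_range.2 (hc n le_rfl)) hz
    · refine Finset.sum_eq_zero fun z _ => ?_
      rw [Set.indicator_of_notMem (by rintro ⟨h1, _⟩; exact hc h1), zero_mul]
  set P : ℕ → Ω → ℝ := fun n ω => harmF 0 k + ∑ t ∈ Finset.range n, D t ω with hP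
  have hPi : ∀ n, Integrable (P n) μ := fun n =>
    (integrable_const _).add (integrable_finsetSum _ fun t _ => hDi t)
  have hP0 : ∀ n, ∫ ω, P n ω ∂μ = harmF 0 k := by
    intro n
    simp only [hP]
    rw [integral_add (integrable_const _) (integrable_finsetSum _ fun t _ => hDi t),
      integral_finsetSum _ fun t _ => hDi t]
    simp [hD0]
  have hlt : ∀ ω s, s < τ ω → Z s ω < h := by
    intro ω s hs
    rw [hτ] at hs
    have := Nat.notMem_of_lt_sInf hs
    simpa using this
  have hPeq : ∀ ω, (∃ t, h ≤ Z t ω) → ∀ n, P n ω = harmF (min (τ ω) n) (Z (min (τ ω) n) ω) := by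
    intro ω hω n
    have hge : h ≤ Z (τ ω) ω := by
      rw [hτ]
      exact Nat.sInf_mem (s := {t : ℕ | h ≤ Z t ω}) hω
    induction n with
    | zero => simp [hP, hZ0]
    | succ n ih =>
      have e : P (n + 1) ω = P n ω + D n ω := by
        simp only [hP, Finset.sum_range_succ]
        ring
      rw [e, ih, hDeq]
      by_cases hn : n < τ ω
      · rw [if_pos fun s hs => hlt ω s (by omega), min_eq_right hn.le,
          min_eq_right (by omega : n + 1 ≤ τ ω)]
        ring
      · rw [if_neg, min_eq_left (by omega), min_eq_left (by omega), add_zero]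
        intro hc
        have := hc (τ ω) (by omega)
        omega
  have hτ2 : Integrable (fun ω => (τ ω : ℝ) ^ 2) μ := by
    refine Integrable.mono' ((hint1.norm.add hint2).const_mul 4)
      (hint3.aestronglyMeasurable.pow 2) (Filter.Eventually.of_forall fun ω => ?_)
    simp only [Pi.add_apply]
    rw [Real.norm_of_nonneg (by positivity), Real.norm_eq_abs]
    have h1 := neg_abs_le ((τ ω : ℝ) * (Z (τ ω) ω : ℝ) - (1 / 2) * (τ ω : ℝ) ^ 2)
    nlinarith [sq_nonneg ((τ ω : ℝ) / 2 - (Z (τ ω) ω : ℝ))]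
  have hFi : Integrable (fun ω => harmF (τ ω) (Z (τ ω) ω)) μ :=
    (hint1.sub (hint2.const_mul (1 / 4))).add (hint3.const_mul (1 / 4))
  have hlim : Filter.Tendsto (fun n => ∫ ω, P n ω ∂μ) Filter.atTop
      (nhds (∫ ω, harmF (τ ω) (Z (τ ω) ω) ∂μ)) := by
    refine tendsto_integral_of_dominated_convergence
      (fun ω => ‖harmF (τ ω) (Z (τ ω) ω)‖ + ((h : ℝ) * (τ ω : ℝ) + (1 / 2) * (τ ω : ℝ) ^ 2 +
        (1 / 4) * (h : ℝ) ^ 2 + (1 / 4) * (τ ω : ℝ))) (fun n => (hPi n).aestronglyMeasurable)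
      (hFi.norm.add ((((hint3.const_mul _).add (hτ2.const_mul _)).add (integrable_const _)).add
        (hint3.const_mul _))) ?_ ?_
    · intro n
      filter_upwards [hfin] with ω hω
      rw [hPeq ω hω n]
      by_cases hn : n < τ ω
      · rw [min_eq_right hn.le]
        have hz : (Z n ω : ℝ) ≤ h := by exact_mod_cast (hlt ω n hn).le
        have hz0 : (0 : ℝ) ≤ Z n ω := by positivity
        have hn1 : (n : ℝ) ≤ τ ω := by exact_mod_cast hn.le
        have hn0 : (0 : ℝ) ≤ n := by positivity
        have g1 : (n : ℝ) * Z n ω ≤ h * τ ω := by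
          rw [mul_comm]
          exact mul_le_mul hz hn1 hn0 (by positivity)
        have g2 : (n : ℝ) ^ 2 ≤ (τ ω : ℝ) ^ 2 := by gcongr
        have g3 : (Z n ω : ℝ) ^ 2 ≤ (h : ℝ) ^ 2 := by gcongr
        have g4 : 0 ≤ (n : ℝ) * Z n ω := by positivity
        have g5 : 0 ≤ (n : ℝ) ^ 2 := by positivity
        have g6 : 0 ≤ (Z n ω : ℝ) ^ 2 := by positivity
        have g7 : ‖harmF n (Z n ω)‖ ≤ (h : ℝ) * (τ ω : ℝ) + (1 / 2) * (τ ω : ℝ) ^ 2 +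
            (1 / 4) * (h : ℝ) ^ 2 + (1 / 4) * (τ ω : ℝ) := by
          rw [Real.norm_eq_abs, abs_le, harmF]
          constructor <;> linarith
        have := norm_nonneg (harmF (τ ω) (Z (τ ω) ω))
        linarith
      · rw [min_eq_left (by omega)]
        have : (0 : ℝ) ≤ (h : ℝ) * (τ ω : ℝ) + (1 / 2) * (τ ω : ℝ) ^ 2 +
            (1 / 4) * (h : ℝ) ^ 2 + (1 / 4) * (τ ω : ℝ) := by positivity
        linarith
    · filter_upwards [hfin] with ω hω
      refine tendsto_const_nhds.congr' ?_
      filter_upwards [Filter.eventually_ge_atTop (τ ω)] with n hn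
      rw [hPeq ω hω n, min_eq_left hn]
  simp only [hP0] at hlim
  have hkey : harmF 0 k = ∫ ω, harmF (τ ω) (Z (τ ω) ω) ∂μ :=
    tendsto_nhds_unique tendsto_const_nhds hlim
  have hsplit : ∫ ω, harmF (τ ω) (Z (τ ω) ω) ∂μ =
      ∫ ω, ((τ ω : ℝ) * (Z (τ ω) ω : ℝ) - (1 / 2) * (τ ω : ℝ) ^ 2) ∂μ
      - (1 / 4) * ∫ ω, (Z (τ ω) ω : ℝ) ^ 2 ∂μ + (1 / 4) * ∫ ω, (τ ω : ℝ) ∂μ := by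
    simp only [harmF]
    have hb : Integrable (fun ω => (τ ω : ℝ) * (Z (τ ω) ω : ℝ) - (1 / 2) * (τ ω : ℝ) ^ 2 -
        (1 / 4) * (Z (τ ω) ω : ℝ) ^ 2) μ := hint1.sub (hint2.const_mul (1 / 4))
    rw [integral_add hb (hint3.const_mul (1 / 4)),
      integral_sub hint1 (hint2.const_mul (1 / 4)), integral_const_mul, integral_const_mul]
  have hk : harmF 0 k = - (1 / 4) * (k : ℝ) ^ 2 := by
    simp [harmF]
  rw [hsplit, hk] at hkey
  linarith
end

section
/- For every h ≥ 1 and initial value Z_0 = k with 0 ≤ k < h, the stopping time τ_h is almost surely finite and E[τ_h] = E[Z_{τ_h}] − k. In particular, E[τ_h | Z_0 = k] ≥ h − k. -/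
open MeasureTheory ProbabilityTheory

open scoped ENNReal

/-- mean of the geometric distribution -/
lemma geom_tsum : ∑' j : ℕ, (j : ℝ≥0∞) * (1 / 2) ^ (j + 1) = 1 := by
  have h1 : HasSum (fun n : ℕ => (n : ℝ) * (1 / 2) ^ n) 2 := by
    have := hasSum_coe_mul_geometric_of_norm_lt_one (𝕜 := ℝ) (r := 1 / 2) (by norm_num)
    have e : (1 / 2 : ℝ) / (1 - 1 / 2) ^ 2 = 2 := by norm_num
    rw [e] at this
    exact this
  have h2 : HasSum (fun n : ℕ => (n : ℝ) * (1 / 2) ^ (n + 1)) 1 := by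
    have h1' := h1.mul_right (1 / 2)
    have e : (2 : ℝ) * (1 / 2) = 1 := by norm_num
    have e' : (fun n : ℕ => (n : ℝ) * (1 / 2) ^ (n + 1)) =
        fun n : ℕ => (n : ℝ) * (1 / 2) ^ n * (1 / 2) := by
      funext n; ring
    rw [e] at h1'
    rw [e']
    exact h1'
  have h3 := ENNReal.ofReal_tsum_of_nonneg (fun n => by positivity) h2.summable
  rw [h2.tsum_eq, ENNReal.ofReal_one] at h3
  refine Eq.trans (tsum_congr fun n => ?_) h3.symm
  rw [ENNReal.ofReal_mul (by positivity), ENNReal.ofReal_pow (by positivity),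
    ENNReal.ofReal_natCast, ENNReal.ofReal_div_of_pos (by norm_num)]
  simp

lemma geom_mean {Ω : Type*} [MeasurableSpace Ω] (μ : Measure Ω)
    (X : Ω → ℕ) (hX : Measurable X) (hd : ∀ j, μ {ω | X ω = j} = (1 / 2) ^ (j + 1)) :
    ∫⁻ ω, (X ω : ℝ≥0∞) ∂μ = 1 := by
  have h1 : ∫⁻ ω, (X ω : ℝ≥0∞) ∂μ = ∫⁻ n, (n : ℝ≥0∞) ∂(μ.map X) :=
    (lintegral_map (f := fun n : ℕ => (n : ℝ≥0∞)) (measurable_of_countable _) hX).symm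
  rw [h1, lintegral_countable', ← geom_tsum]
  congr 1
  ext j
  rw [Measure.map_apply hX (measurableSet_singleton j), ← hd j]
  rfl

/-- the past up to time `n` -/
def pastSigma {Ω : Type*} (X : ℕ → ℕ → Ω → ℕ) (n : ℕ) : MeasurableSpace Ω :=
  ⨆ p ∈ {p : ℕ × ℕ | p.1 < n}, MeasurableSpace.comap (X p.1 p.2) ⊤

lemma pastSigma_mono {Ω : Type*} (X : ℕ → ℕ → Ω → ℕ) {m n : ℕ} (hmn : m ≤ n) :
    pastSigma X m ≤ pastSigma X n := by
  unfold pastSigma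
  exact biSup_mono (fun p hp => lt_of_lt_of_le hp hmn)

lemma meas_X_past {Ω : Type*} (X : ℕ → ℕ → Ω → ℕ) (n i : ℕ) :
    Measurable[pastSigma X (n + 1)] (X n i) := by
  apply Measurable.mono (comap_measurable (X n i)) _ le_rfl
  exact le_biSup (fun p : ℕ × ℕ => MeasurableSpace.comap (X p.1 p.2) ⊤)
    (show (n, i) ∈ {p : ℕ × ℕ | p.1 < n + 1} from Nat.lt_succ_self n)

lemma meas_randsum {Ω : Type*} (m : MeasurableSpace Ω) (Y : ℕ → Ω → ℕ) (N : Ω → ℕ)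
    (hY : ∀ i, Measurable (Y i)) (hN : Measurable N) :
    Measurable (fun ω => ∑ i ∈ Finset.range (N ω + 1), Y i ω) := by
  have h1 : Measurable (fun p : ℕ × Ω => ∑ i ∈ Finset.range (p.1 + 1), Y i p.2) := by
    apply measurable_from_prod_countable_right
    intro n
    exact Finset.measurable_fun_sum (Finset.range (n + 1)) (fun i _ => hY i)
  exact h1.comp (hN.prodMk measurable_id)

lemma meas_Z_past {Ω : Type*} (X : ℕ → ℕ → Ω → ℕ) (k : ℕ) (Z : ℕ → Ω → ℕ)
    (hZ0 : ∀ ω, Z 0 ω = k)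
    (hZrec : ∀ t ω, Z (t + 1) ω = ∑ i ∈ Finset.range (Z t ω + 1), X t i ω) (n : ℕ) :
    Measurable[pastSigma X n] (Z n) := by
  induction n with
  | zero =>
    have : Z 0 = fun _ => k := funext hZ0
    rw [this]
    exact measurable_const
  | succ n ih =>
    rw [funext (hZrec n)]
    exact meas_randsum _ _ _ (meas_X_past X n) (ih.mono (pastSigma_mono X n.le_succ) le_rfl)

lemma indep_past {Ω : Type*} [MeasurableSpace Ω] (μ : Measure Ω)
    (X : ℕ → ℕ → Ω → ℕ) (hXmeas : ∀ t i, Measurable (X t i))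
    (hXindep : iIndepFun (fun p : ℕ × ℕ => X p.1 p.2) μ) (n i : ℕ) :
    Indep (pastSigma X n) (MeasurableSpace.comap (X n i) ⊤) μ := by
  have h1 := indep_iSup_of_disjoint (m := fun p : ℕ × ℕ => MeasurableSpace.comap (X p.1 p.2) ⊤)
    (fun p => (hXmeas p.1 p.2).comap_le) hXindep
    (S := {p : ℕ × ℕ | p.1 < n}) (T := {(n, i)}) (by simp)
  simpa [pastSigma] using h1

lemma meas_ind {Ω : Type*} (m : MeasurableSpace Ω) (B : Set Ω) (hB : MeasurableSet B) :
    Measurable (B.indicator (1 : Ω → ℝ≥0∞)) :=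
  measurable_one.indicator hB

lemma past_le {Ω : Type*} [m : MeasurableSpace Ω]
    (X : ℕ → ℕ → Ω → ℕ) (hXmeas : ∀ t i, Measurable (X t i)) (n : ℕ) :
    pastSigma X n ≤ m :=
  iSup₂_le (fun p _ => (hXmeas p.1 p.2).comap_le)

theorem expectation_of_tau
    {Ω : Type*} [MeasurableSpace Ω] (μ : Measure Ω) [IsProbabilityMeasure μ]
    -- i.i.d. offspring variables, geometric with mean 1: P(X_{t,i} = j) = 2^{-j-1}
    (X : ℕ → ℕ → Ω → ℕ) (hXmeas : ∀ t i, Measurable (X t i))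
    (hXindep : iIndepFun (fun p : ℕ × ℕ => X p.1 p.2) μ)
    (hXdist : ∀ t i j, μ {ω | X t i ω = j} = (1 / 2) ^ (j + 1))
    -- the critical geometric branching process with one immigrant per generation,
    -- started from k
    (k : ℕ) (Z : ℕ → Ω → ℕ) (hZmeas : ∀ t, Measurable (Z t))
    (hZ0 : ∀ ω, Z 0 ω = k)
    (hZrec : ∀ t ω, Z (t + 1) ω = ∑ i ∈ Finset.range (Z t ω + 1), X t i ω)
    -- the first hitting time of [h, ∞)
    (h : ℕ) (τ : Ω → ℕ) (hτ : ∀ ω, τ ω = sInf {t : ℕ | h ≤ Z t ω})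
    (hh : 1 ≤ h) (hkh : k < h) :
    (∀ᵐ ω ∂μ, ∃ t, h ≤ Z t ω) ∧
    (∫ ω, (τ ω : ℝ) ∂μ = (∫ ω, (Z (τ ω) ω : ℝ) ∂μ) - (k : ℝ)) ∧
    (h : ℝ) - (k : ℝ) ≤ ∫ ω, (τ ω : ℝ) ∂μ := by
  set A : ℕ → Set Ω := fun n => {ω | ∀ s ≤ n, Z s ω < h} with hA
  have hApast : ∀ n, MeasurableSet[pastSigma X n] (A n) := by
    intro n
    have : A n = ⋂ s, ⋂ (_ : s ≤ n), (Z s) ⁻¹' (Set.Iio h) := by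
      ext ω; simp [hA]
    rw [this]
    refine MeasurableSet.iInter fun s => MeasurableSet.iInter fun hs => ?_
    exact ((meas_Z_past X k Z hZ0 hZrec s).mono (pastSigma_mono X hs) le_rfl) measurableSet_Iio
  have hAm : ∀ n, MeasurableSet (A n) := fun n => past_le X hXmeas n _ (hApast n)
  -- key independence
  have key : ∀ n i (B : Set Ω), MeasurableSet[pastSigma X n] B →
      ∫⁻ ω, B.indicator 1 ω * (X n i ω : ℝ≥0∞) ∂μ = μ B := by
    intro n i B hB
    have h1 := lintegral_mul_eq_lintegral_mul_lintegral_of_independent_measurableSpace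
      (μ := μ) (Mf := pastSigma X n) (Mg := MeasurableSpace.comap (X n i) ⊤)
      (past_le X hXmeas n) (hXmeas n i).comap_le (indep_past μ X hXmeas hXindep n i)
      (f := B.indicator 1) (g := fun ω => (X n i ω : ℝ≥0∞))
      (meas_ind (pastSigma X n) B hB)
      ((measurable_of_countable (fun n : ℕ => (n : ℝ≥0∞))).comp (comap_measurable (X n i)))
    rw [h1, geom_mean μ _ (hXmeas n i) (hXdist n i), mul_one,
      lintegral_indicator_one (past_le X hXmeas n _ hB)]
  have hcast : ∀ n, Measurable (fun ω => (Z n ω : ℝ≥0∞)) := fun n =>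
    (measurable_of_countable (fun n : ℕ => (n : ℝ≥0∞))).comp (hZmeas n)
  have hIm : ∀ n, Measurable ((A n).indicator (1 : Ω → ℝ≥0∞)) := fun n =>
    measurable_one.indicator (hAm n)
  have hIZ : ∀ n m, Measurable (fun ω => (A n).indicator (1 : Ω → ℝ≥0∞) ω * (Z m ω : ℝ≥0∞)) :=
    fun n m => (hIm n).mul (hcast m)
  -- one step drift
  have step : ∀ n, ∫⁻ ω, (A n).indicator 1 ω * (Z (n + 1) ω : ℝ≥0∞) ∂μ =
      ∫⁻ ω, (A n).indicator 1 ω * (Z n ω : ℝ≥0∞) ∂μ + μ (A n) := by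
    intro n
    let B : ℕ → Set Ω := fun i => A n ∩ {ω | i ≤ Z n ω}
    have hB : ∀ i, MeasurableSet[pastSigma X n] (B i) := fun i =>
      (hApast n).inter ((meas_Z_past X k Z hZ0 hZrec n) (measurableSet_Ici (a := i)))
    have hBm : ∀ i, MeasurableSet (B i) := fun i => past_le X hXmeas n _ (hB i)
    have e1 : ∀ (ω : Ω) (f : ℕ → ℝ≥0∞), ∑' i, (B i).indicator 1 ω * f i =
        (A n).indicator 1 ω * ∑ i ∈ Finset.range (Z n ω + 1), f i := by
      intro ω f
      rw [tsum_eq_sum (s := Finset.range (Z n ω + 1)), Finset.mul_sum]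
      · refine Finset.sum_congr rfl fun i hi => ?_
        have : i ≤ Z n ω := by simpa [Nat.lt_succ_iff] using hi
        by_cases hω : ω ∈ A n <;> simp [B, hω, this]
      · intro i hi
        have : ¬ i ≤ Z n ω := by simpa [Nat.lt_succ_iff] using hi
        simp [B, this]
    have e2 : ∫⁻ ω, (A n).indicator 1 ω * (Z (n + 1) ω : ℝ≥0∞) ∂μ = ∑' i, μ (B i) := by
      simp_rw [hZrec, Nat.cast_sum]
      simp_rw [← e1 _ (fun i => (X n i _ : ℝ≥0∞))]
      rw [lintegral_tsum]
      · exact tsum_congr fun i => key n i _ (hB i)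
      · intro i
        exact ((measurable_one.indicator (hBm i)).mul
          ((measurable_of_countable (fun n : ℕ => (n : ℝ≥0∞))).comp (hXmeas n i))).aemeasurable
    have e3 : ∑' i, μ (B i) = ∫⁻ ω, (A n).indicator 1 ω * ((Z n ω : ℝ≥0∞) + 1) ∂μ := by
      have : ∀ ω, (A n).indicator 1 ω * ((Z n ω : ℝ≥0∞) + 1) = ∑' i, (B i).indicator 1 ω := by
        intro ω
        have := e1 ω (fun _ => 1)
        simp only [mul_one] at this
        rw [this]; simp
      simp_rw [this]
      rw [lintegral_tsum (fun i => (measurable_one.indicator (hBm i)).aemeasurable)]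
      exact tsum_congr fun i => (lintegral_indicator_one (hBm i)).symm
    rw [e2, e3]
    simp_rw [mul_add, mul_one]
    rw [lintegral_add_left (hIZ n n), lintegral_indicator_one (hAm n)]
  -- geometric decay
  set q : ℝ≥0∞ := 1 - (1 / 2) ^ (h + 1) with hq
  have hq1 : q < 1 := by
    apply ENNReal.sub_lt_self ENNReal.one_ne_top one_ne_zero
    exact pow_ne_zero _ (by simp)
  have decay : ∀ n, μ (A n) ≤ q ^ n := by
    intro n
    induction n with
    | zero => simpa using prob_le_one
    | succ n ih =>
      have hsub : A (n + 1) ⊆ A n ∩ {ω | X n 0 ω = h}ᶜ := by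
        intro ω hω
        refine ⟨fun s hs => hω s (by omega), fun hx => ?_⟩
        have h1 := hω (n + 1) le_rfl
        rw [hZrec] at h1
        have h2 : X n 0 ω ≤ ∑ i ∈ Finset.range (Z n ω + 1), X n i ω :=
          Finset.single_le_sum (f := fun i => X n i ω) (fun _ _ => Nat.zero_le _) (by simp)
        have h3 : X n 0 ω = h := hx
        omega
      have hi : μ (A n ∩ {ω | X n 0 ω = h}ᶜ) = μ (A n) * μ ({ω | X n 0 ω = h}ᶜ) :=
        (Indep_iff _ _ μ).1 (indep_past μ X hXmeas hXindep n 0) _ _ (hApast n)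
          ⟨{h}ᶜ, trivial, rfl⟩
      have hc : μ ({ω | X n 0 ω = h}ᶜ) = q := by
        rw [prob_compl_eq_one_sub (s := {ω | X n 0 ω = h}) ((hXmeas n 0) (measurableSet_singleton h)), hXdist]
      calc μ (A (n + 1)) ≤ _ := measure_mono hsub
        _ = μ (A n) * q := by rw [hi, hc]
        _ ≤ q ^ n * q := by gcongr
        _ = _ := (pow_succ q n).symm
  have hsum : ∑' n, μ (A n) ≠ ∞ := by
    refine ne_top_of_le_ne_top ?_ (ENNReal.tsum_le_tsum decay)
    rw [ENNReal.tsum_geometric]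
    exact ENNReal.inv_ne_top.2 (tsub_pos_of_lt hq1).ne'
  have hfin : ∀ᵐ ω ∂μ, ∃ t, h ≤ Z t ω := by
    have hnull := measure_limsup_atTop_eq_zero hsum
    rw [ae_iff]
    refine measure_mono_null ?_ hnull
    intro ω hω
    have : ∀ n, ω ∈ A n := fun n s _ => by
      have hω' : ¬ ∃ t, h ≤ Z t ω := hω
      push Not at hω'
      exact hω' s
    rw [Filter.mem_limsup_iff_frequently_mem]
    exact Filter.Frequently.of_forall this
  -- pointwise identities
  have hmem : ∀ ω, (∃ t, h ≤ Z t ω) → h ≤ Z (τ ω) ω ∧ ∀ n, ω ∈ A n ↔ n < τ ω := by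
    intro ω hω
    have h1 : h ≤ Z (τ ω) ω := by rw [hτ]; exact Nat.sInf_mem (s := {t | h ≤ Z t ω}) hω
    refine ⟨h1, fun n => ⟨fun hn => ?_, fun hn s hs => ?_⟩⟩
    · by_contra hc
      exact absurd (hn _ (not_lt.1 hc)) (not_lt.2 h1)
    · by_contra hc
      have : τ ω ≤ s := by rw [hτ]; exact Nat.sInf_le (not_lt.1 hc)
      omega
  have hts : ∀ ω, (∃ t, h ≤ Z t ω) → ∀ f : ℕ → ℝ≥0∞,
      ∑' n, (A n).indicator 1 ω * f n = ∑ n ∈ Finset.range (τ ω), f n := by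
    intro ω hω f
    obtain ⟨_, h2⟩ := hmem ω hω
    rw [tsum_eq_sum (s := Finset.range (τ ω))]
    · refine Finset.sum_congr rfl fun i hi => ?_
      have : ω ∈ A i := (h2 i).2 (by simpa using hi)
      simp [this]
    · intro i hi
      have : ω ∉ A i := fun hc => hi (by simpa using (h2 i).1 hc)
      simp [this]
  set T : Ω → ℝ≥0∞ := fun ω => ∑' n, (A n).indicator 1 ω with hT
  set U : Ω → ℝ≥0∞ := fun ω => ∑' n, (A n).indicator 1 ω * (Z (n + 1) ω : ℝ≥0∞) with hU
  set V : Ω → ℝ≥0∞ := fun ω => ∑' n, (A n).indicator 1 ω * (Z n ω : ℝ≥0∞) with hV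
  have hTm : Measurable T := Measurable.tsum hIm
  have hUm : Measurable U := Measurable.tsum fun n => (hIm n).mul (hcast _)
  have hVm : Measurable V := Measurable.tsum fun n => (hIm n).mul (hcast _)
  have iT : ∫⁻ ω, T ω ∂μ = ∑' n, μ (A n) := by
    rw [hT, lintegral_tsum fun n => (hIm n).aemeasurable]
    exact tsum_congr fun n => lintegral_indicator_one (hAm n)
  have iUV : ∫⁻ ω, U ω ∂μ = ∫⁻ ω, V ω ∂μ + ∫⁻ ω, T ω ∂μ := by
    rw [iT, hU, hV, lintegral_tsum fun n => (hIZ n (n + 1)).aemeasurable,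
      lintegral_tsum fun n => (hIZ n n).aemeasurable, ← ENNReal.tsum_add]
    exact tsum_congr step
  have iVfin : ∫⁻ ω, V ω ∂μ ≠ ∞ := by
    have h1 : ∫⁻ ω, V ω ∂μ ≤ ∫⁻ ω, h * T ω ∂μ := by
      refine lintegral_mono fun ω => ?_
      simp only [hV, hT]
      rw [← ENNReal.tsum_mul_left]
      refine ENNReal.tsum_le_tsum fun n => ?_
      by_cases hω : ω ∈ A n
      · simpa [hω] using (hω n le_rfl).le
      · simp [hω]
    refine ne_top_of_le_ne_top ?_ h1
    rw [lintegral_const_mul _ hTm, iT]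
    exact ENNReal.mul_ne_top (ENNReal.natCast_ne_top h) hsum
  have aeT : ∀ᵐ ω ∂μ, T ω = (τ ω : ℝ≥0∞) := by
    filter_upwards [hfin] with ω hω
    have := hts ω hω (fun _ => 1)
    simpa [hT] using this
  have aeZ : ∀ᵐ ω ∂μ, U ω + k = V ω + (Z (τ ω) ω : ℝ≥0∞) := by
    filter_upwards [hfin] with ω hω
    simp only [hU, hV]
    rw [hts ω hω (fun n => (Z (n + 1) ω : ℝ≥0∞)), hts ω hω (fun n => (Z n ω : ℝ≥0∞)),
      ← Finset.sum_range_succ (fun n => (Z n ω : ℝ≥0∞)),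
      Finset.sum_range_succ' (fun n => (Z n ω : ℝ≥0∞)), hZ0]
  have aeV : ∀ᵐ ω ∂μ, V ω ≠ ∞ := by
    filter_upwards [ae_lt_top hVm iVfin] with ω hω using hω.ne
  have Zm : AEMeasurable (fun ω => (Z (τ ω) ω : ℝ≥0∞)) μ := by
    refine ⟨fun ω => U ω + k - V ω, (hUm.add_const _).sub hVm, ?_⟩
    filter_upwards [aeZ, aeV] with ω h1 h2
    rw [h1, ENNReal.add_sub_cancel_left h2]
  have iZ : ∫⁻ ω, (Z (τ ω) ω : ℝ≥0∞) ∂μ = ∫⁻ ω, T ω ∂μ + k := by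
    have h1 := lintegral_congr_ae aeZ
    rw [lintegral_add_left hUm, lintegral_add_left hVm, iUV, add_assoc] at h1
    have h2 := (ENNReal.add_right_inj iVfin).1 h1
    rw [← h2]; simp
  have RT : ∫ ω, (τ ω : ℝ) ∂μ = (∫⁻ ω, T ω ∂μ).toReal := by
    rw [lintegral_congr_ae aeT, ← integral_toReal]
    · simp
    · exact hTm.aemeasurable.congr aeT
    · simp
  have RZ : ∫ ω, (Z (τ ω) ω : ℝ) ∂μ = (∫⁻ ω, (Z (τ ω) ω : ℝ≥0∞) ∂μ).toReal := by
    rw [← integral_toReal Zm]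
    · simp
    · simp
  have iTfin : ∫⁻ ω, T ω ∂μ ≠ ∞ := by rw [iT]; exact hsum
  have main : ∫ ω, (τ ω : ℝ) ∂μ = (∫ ω, (Z (τ ω) ω : ℝ) ∂μ) - (k : ℝ) := by
    rw [RT, RZ, iZ, ENNReal.toReal_add iTfin (ENNReal.natCast_ne_top k)]
    simp
  refine ⟨hfin, main, ?_⟩
  rw [main]
  have hge : (h : ℝ≥0∞) ≤ ∫⁻ ω, (Z (τ ω) ω : ℝ≥0∞) ∂μ := by
    calc (h : ℝ≥0∞) = ∫⁻ _, (h : ℝ≥0∞) ∂μ := by simp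
      _ ≤ _ := by
        refine lintegral_mono_ae ?_
        filter_upwards [hfin] with ω hω
        exact_mod_cast (hmem ω hω).1
  have hge2 : (h : ℝ) ≤ ∫ ω, (Z (τ ω) ω : ℝ) ∂μ := by
    rw [RZ]
    have hne : ∫⁻ ω, (Z (τ ω) ω : ℝ≥0∞) ∂μ ≠ ∞ := by
      rw [iZ]
      exact ENNReal.add_ne_top.2 ⟨iTfin, ENNReal.natCast_ne_top k⟩
    have := ENNReal.toReal_mono hne hge
    simpa using this
  linarith
end

section
/- (Overshoot bounds) For all integers 0 ≤ k ≤ h ≤ u: (a) for the chain (Y_t) started at Y_0 = k, P(Y_{σ_h} ≥ u | σ_h < ∞) ≤ P(Y_1 ≥ u | Y_0 = h, Y_1 ≥ h); (b) for the chain (Z_t) started at Z_0 = k, P(Z_{τ_h} ≥ u) ≤ P(Z_1 ≥ u | Z_0 = h, Z_1 ≥ h). -/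
open MeasureTheory ProbabilityTheory

namespace Overshoot

lemma multichoose_step (n k : ℕ) :
    (k + 1) * Nat.multichoose n (k + 1) = (n + k) * Nat.multichoose n k := by
  rcases Nat.eq_zero_or_pos n with rfl | hn
  · cases k <;> simp
  · rw [Nat.multichoose_eq, Nat.multichoose_eq]
    have e : n + (k + 1) - 1 = (n + k - 1) + 1 := by omega
    have e' : n + k = (n + k - 1) + 1 := by omega
    rw [e, mul_comm, ← Nat.add_one_mul_choose_eq, ← e']

lemma multichoose_tp (i h a : ℕ) (hih : i ≤ h) (d : ℕ) :
    Nat.multichoose i (a + d) * Nat.multichoose h a ≤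
      Nat.multichoose h (a + d) * Nat.multichoose i a := by
  induction d with
  | zero => simp [mul_comm]
  | succ d ih =>
    have h1 := multichoose_step i (a + d)
    have h2 := multichoose_step h (a + d)
    refine le_of_mul_le_mul_left (a := a + d + 1) ?_ (by omega)
    rw [← add_assoc, ← mul_assoc, ← mul_assoc, h1, h2, mul_assoc, mul_assoc]
    exact Nat.mul_le_mul (by omega) ih

lemma multichoose_sum (n j : ℕ) :
    ∑ l ∈ Finset.range (j + 1), Nat.multichoose n l = Nat.multichoose (n + 1) j := by
  induction j with
  | zero => simp
  | succ j ih => rw [Finset.sum_range_succ, ih, Nat.multichoose_succ_succ, add_comm]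

/-- negative binomial weights -/
noncomputable def nb (n j : ℕ) : ENNReal := Nat.multichoose n j * (1 / 2) ^ (n + j)

lemma nb_ne_zero (h c : ℕ) : nb (h + c) h ≠ 0 := by
  unfold nb
  have : Nat.multichoose (h + c) h ≠ 0 := by
    rw [Nat.multichoose_eq]
    rcases Nat.eq_zero_or_pos h with rfl | hh
    · simp
    · exact (Nat.choose_pos (by omega)).ne'
  simp [this]

lemma nb_tp (i h a b : ℕ) (hih : i ≤ h) (hab : a ≤ b) :
    nb i b * nb h a ≤ nb h b * nb i a := by
  obtain ⟨d, rfl⟩ := Nat.exists_eq_add_of_le hab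
  have key : ((Nat.multichoose i (a + d) * Nat.multichoose h a : ℕ) : ENNReal) ≤
      (Nat.multichoose h (a + d) * Nat.multichoose i a : ℕ) := by
    exact_mod_cast multichoose_tp i h a hih d
  push_cast at key
  unfold nb
  calc _ = ((Nat.multichoose i (a + d) : ENNReal) * Nat.multichoose h a) *
        (1 / 2) ^ (i + h + a + (a + d)) := by ring
    _ ≤ ((Nat.multichoose h (a + d) : ENNReal) * Nat.multichoose i a) *
        (1 / 2) ^ (i + h + a + (a + d)) := by gcongr
    _ = _ := by ring

/-- Monotone likelihood ratio implies conditional tail domination. -/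
lemma tail_tp (ν η : Measure ℕ) (i h a u : ℕ) (hih : i ≤ h) (hau : a ≤ u)
    (hν : ∀ j, ν {j} = nb i j) (hη : ∀ j, η {j} = nb h j) :
    ν (Set.Ici u) * η (Set.Ici a) ≤ η (Set.Ici u) * ν (Set.Ici a) := by
  have split : ∀ m : Measure ℕ, m (Set.Ici a) = m (Set.Ico a u) + m (Set.Ici u) := by
    intro m
    rw [← measure_union _ measurableSet_Ici, Set.Ico_union_Ici_eq_Ici hau]
    rw [Set.disjoint_left]
    intro x hx hx'
    simp only [Set.mem_Ico, Set.mem_Ici] at hx hx'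
    omega
  have key : ν (Set.Ici u) * η (Set.Ico a u) ≤ η (Set.Ici u) * ν (Set.Ico a u) := by
    rw [← Measure.tsum_indicator_apply_singleton ν (Set.Ici u) measurableSet_Ici,
      ← Measure.tsum_indicator_apply_singleton η (Set.Ici u) measurableSet_Ici,
      ← Measure.tsum_indicator_apply_singleton ν (Set.Ico a u) measurableSet_Ico,
      ← Measure.tsum_indicator_apply_singleton η (Set.Ico a u) measurableSet_Ico]
    rw [← ENNReal.tsum_mul_right, ← ENNReal.tsum_mul_right]
    refine ENNReal.tsum_le_tsum fun y => ?_
    rw [← ENNReal.tsum_mul_left, ← ENNReal.tsum_mul_left]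
    refine ENNReal.tsum_le_tsum fun x => ?_
    by_cases hy : y ∈ Set.Ici u
    · by_cases hx : x ∈ Set.Ico a u
      · rw [Set.indicator_of_mem hy, Set.indicator_of_mem hy, Set.indicator_of_mem hx,
          Set.indicator_of_mem hx, hν, hη, hν, hη]
        simp only [Set.mem_Ico, Set.mem_Ici] at hx hy
        exact nb_tp i h x y hih (by omega)
      · simp [Set.indicator_of_notMem hx]
    · simp [Set.indicator_of_notMem hy]
  rw [split ν, split η, mul_add, mul_add, mul_comm (η (Set.Ici u)) (ν (Set.Ici u))]
  gcongr

lemma sum_meas {Ω : Type*} (m : MeasurableSpace Ω) (f : Ω → ℕ) (g : ℕ → Ω → ℕ)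
    (hf : Measurable[m] f) (hg : ∀ i, Measurable[m] (g i)) :
    Measurable[m] (fun ω => ∑ i ∈ Finset.range (f ω), g i ω) := by
  refine measurable_to_countable' fun y => ?_
  have : (fun ω => ∑ i ∈ Finset.range (f ω), g i ω) ⁻¹' {y} =
      ⋃ n, (f ⁻¹' {n} ∩ (fun ω => ∑ i ∈ Finset.range n, g i ω) ⁻¹' {y}) := by
    ext ω; simp
  rw [this]
  refine MeasurableSet.iUnion fun n => (hf (measurableSet_singleton n)).inter ?_
  exact (Finset.measurable_fun_sum _ fun i _ => hg i) (measurableSet_singleton y)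

section
variable {Ω : Type*} [MeasurableSpace Ω] (μ : Measure Ω) [IsProbabilityMeasure μ]
  (X : ℕ → ℕ → Ω → ℕ) (hmeas : ∀ t i, Measurable (X t i))
  (hindep : iIndepFun (fun p : ℕ × ℕ => X p.1 p.2) μ)
  (hdist : ∀ t i j, μ {ω | X t i ω = j} = (1 / 2) ^ (j + 1))

/-- sum of the first `n` variables of row `t` -/
def rowSum (n t : ℕ) (ω : Ω) : ℕ := ∑ i ∈ Finset.range n, X t i ω

include hmeas in
lemma rowSum_meas (n t : ℕ) : Measurable (rowSum X n t) :=
  Finset.measurable_fun_sum _ fun i _ => hmeas t i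

include hmeas hindep hdist in
lemma rowSum_law (t n j : ℕ) : μ {ω | rowSum X n t ω = j} = nb n j := by
  induction n generalizing j with
  | zero =>
    cases j <;> simp [rowSum, nb]
  | succ n ih =>
    have hi : IndepFun (∑ i ∈ Finset.range n, X t i) (X t n) μ :=
      (hindep.precomp (g := fun i : ℕ => (t, i)) (fun a b hab => by simpa using hab)
        ).indepFun_finsetSum_of_notMem (fun i => hmeas t i) (by simp)
    have hset : {ω | rowSum X (n + 1) t ω = j} =
        ⋃ l ∈ Finset.range (j + 1), ({ω | rowSum X n t ω = l} ∩ {ω | X t n ω = j - l}) := by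
      ext ω
      simp only [rowSum, Finset.sum_range_succ, Set.mem_ofPred_eq, Set.mem_iUnion,
        Finset.mem_range, Set.mem_inter_iff, exists_prop]
      constructor
      · intro h
        exact ⟨_, by omega, rfl, by omega⟩
      · rintro ⟨l, h1, h2, h3⟩
        omega
    have hm1 : ∀ l, MeasurableSet {ω | rowSum X n t ω = l} := fun l =>
      rowSum_meas X hmeas n t (measurableSet_singleton l)
    have hm2 : ∀ l, MeasurableSet {ω | X t n ω = l} := fun l =>
      hmeas t n (measurableSet_singleton l)
    rw [hset, measure_biUnion_finset]
    · calc _ = ∑ l ∈ Finset.range (j + 1),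
            (Nat.multichoose n l : ENNReal) * (1 / 2) ^ (n + 1 + j) := by
            refine Finset.sum_congr rfl fun l hl => ?_
            have := hi.measure_inter_preimage_eq_mul {l} {j - l}
              (measurableSet_singleton _) (measurableSet_singleton _)
            have e1 : (∑ i ∈ Finset.range n, X t i) ⁻¹' {l} = {ω | rowSum X n t ω = l} := by
              ext ω; simp [rowSum]
            have e2 : X t n ⁻¹' {j - l} = {ω | X t n ω = j - l} := rfl
            rw [e1, e2, ih, hdist] at this
            rw [this, nb, mul_assoc, ← pow_add]
            have : l ≤ j := by simpa [Nat.lt_succ_iff] using hl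
            congr 2
            omega
        _ = _ := by
            rw [← Finset.sum_mul, nb, ← multichoose_sum]
            push_cast
            rfl
    · intro a _ b _ hab
      rw [Function.onFun, Set.disjoint_left]
      rintro ω ⟨h1, _⟩ ⟨h2, _⟩
      exact hab (h1.symm.trans h2)
    · exact fun l _ => (hm1 l).inter (hm2 _)

include hmeas hindep hdist in
lemma rowSum_tail (t t' i h a u : ℕ) (hih : i ≤ h) (hau : a ≤ u) :
    μ {ω | u ≤ rowSum X i t ω} * μ {ω | a ≤ rowSum X h t' ω} ≤
      μ {ω | u ≤ rowSum X h t' ω} * μ {ω | a ≤ rowSum X i t ω} := by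
  have := tail_tp (μ.map (rowSum X i t)) (μ.map (rowSum X h t')) i h a u hih hau
    (fun j => by
      rw [Measure.map_apply (rowSum_meas X hmeas i t) (measurableSet_singleton j)]
      exact rowSum_law μ X hmeas hindep hdist t i j)
    (fun j => by
      rw [Measure.map_apply (rowSum_meas X hmeas h t') (measurableSet_singleton j)]
      exact rowSum_law μ X hmeas hindep hdist t' h j)
  simp only [Measure.map_apply (rowSum_meas X hmeas i t) measurableSet_Ici,
    Measure.map_apply (rowSum_meas X hmeas h t') measurableSet_Ici] at this
  exact this

/-- σ-algebra generated by rows `< t` -/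
def past (t : ℕ) : MeasurableSpace Ω :=
  ⨆ p ∈ {p : ℕ × ℕ | p.1 < t}, MeasurableSpace.comap (X p.1 p.2) inferInstance

lemma X_meas_past (s t i : ℕ) (hst : s < t) : Measurable[past X t] (X s i) := by
  rw [measurable_iff_comap_le]
  exact le_iSup₂_of_le (f := fun (p : ℕ × ℕ) (_ : p ∈ {p : ℕ × ℕ | p.1 < t}) =>
    MeasurableSpace.comap (X p.1 p.2) inferInstance) (s, i) hst le_rfl

variable (c k : ℕ) (W : ℕ → Ω → ℕ) (hW0 : ∀ ω, W 0 ω = k)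
    (hWrec : ∀ t ω, W (t + 1) ω = ∑ i ∈ Finset.range (W t ω + c), X t i ω)

include hW0 hWrec in
lemma W_meas_past (s t : ℕ) (hst : s ≤ t) : Measurable[past X t] (W s) := by
  induction s with
  | zero =>
    have : W 0 = fun _ => k := funext hW0
    rw [this]
    exact measurable_const
  | succ s ih =>
    have : W (s + 1) = fun ω => ∑ i ∈ Finset.range (W s ω + c), X s i ω := funext (hWrec s)
    rw [this]
    exact sum_meas (past X t) (fun ω => W s ω + c) (X s)
      ((measurable_from_top (f := fun n : ℕ => n + c)).comp (ih (by omega)))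
      (fun i => X_meas_past X s t i (by omega))

include hmeas in
lemma past_le (t : ℕ) : past X t ≤ (inferInstance : MeasurableSpace Ω) :=
  iSup₂_le fun p _ => (hmeas p.1 p.2).comap_le

/-- no hit up to time `t`, and value `i` at time `t` -/
def pre (h t i : ℕ) : Set Ω := {ω | (∀ s ≤ t, W s ω < h) ∧ W t ω = i}

include hW0 hWrec in
lemma pre_meas_past (h t i : ℕ) : MeasurableSet[past X t] (pre W h t i) := by
  have : pre W h t i = (⋂ s ∈ Finset.range (t + 1), W s ⁻¹' {x | x < h}) ∩ W t ⁻¹' {i} := by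
    ext ω; simp [pre, Nat.lt_succ_iff]
  rw [this]
  refine MeasurableSet.inter (Finset.measurableSet_biInter _ fun s hs => ?_) ?_
  · exact W_meas_past X c k W hW0 hWrec s t
      (by simpa [Nat.lt_succ_iff] using hs) (MeasurableSet.of_discrete)
  · exact W_meas_past X c k W hW0 hWrec t t le_rfl (MeasurableSet.of_discrete)

include hmeas hindep hW0 hWrec in
lemma pre_indep (h t i n u : ℕ) :
    μ (pre W h t i ∩ {ω | u ≤ rowSum X n t ω}) =
      μ (pre W h t i) * μ {ω | u ≤ rowSum X n t ω} := by
  have hI := indep_iSup_of_disjoint (fun p : ℕ × ℕ => (hmeas p.1 p.2).comap_le)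
    hindep.iIndep (S := {p : ℕ × ℕ | p.1 < t}) (T := {p : ℕ × ℕ | p.1 = t})
    (by
      rw [Set.disjoint_left]
      intro p hp hp'
      simp only [Set.mem_ofPred_eq] at hp hp'
      omega)
  refine (Indep_iff _ _ μ).1 hI _ _ (pre_meas_past X c k W hW0 hWrec h t i) ?_
  have : ∀ j, Measurable[⨆ p ∈ {p : ℕ × ℕ | p.1 = t},
      MeasurableSpace.comap (X p.1 p.2) inferInstance] (X t j) := by
    intro j
    rw [measurable_iff_comap_le]
    exact le_iSup₂_of_le (f := fun (p : ℕ × ℕ) (_ : p ∈ {p : ℕ × ℕ | p.1 = t}) =>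
      MeasurableSpace.comap (X p.1 p.2) inferInstance) (t, j) rfl le_rfl
  exact (Finset.measurable_fun_sum (Finset.range n) fun i _ => this i)
    (MeasurableSet.of_discrete (s := Set.Ici u))

/-- the chain jumps from `i < h` to at least `v` at time `t + 1`, first hit of `[h, ∞)` -/
def jump (h v : ℕ) (q : ℕ × ℕ) : Set Ω :=
  pre W h q.1 q.2 ∩ {ω | v ≤ rowSum X (q.2 + c) q.1 ω}

include hWrec in
lemma jump_union (h v : ℕ) (hhv : h ≤ v) (hkh : k < h) (hW0 : ∀ ω, W 0 ω = k) :
    {ω | v ≤ W (sInf {t : ℕ | h ≤ W t ω}) ω} = ⋃ q, jump X c W h v q := by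
  ext ω
  simp only [Set.mem_ofPred_eq, Set.mem_iUnion, jump, pre, Set.mem_inter_iff, Prod.exists]
  constructor
  · intro hv
    have hlt : ∀ s < sInf {t : ℕ | h ≤ W t ω}, W s ω < h := by
      intro s hs
      have := Nat.notMem_of_lt_sInf hs
      simpa using this
    obtain ⟨t, ht⟩ : ∃ t, sInf {t : ℕ | h ≤ W t ω} = t + 1 := by
      refine Nat.exists_eq_succ_of_ne_zero fun h0 => ?_
      rw [h0, hW0] at hv
      omega
    rw [ht] at hv hlt
    refine ⟨t, W t ω, ⟨fun s hs => hlt s (by omega), rfl⟩, ?_⟩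
    rw [hWrec] at hv
    exact hv
  · rintro ⟨t, i, ⟨h1, rfl⟩, h2⟩
    have e : v ≤ W (t + 1) ω := by rw [hWrec]; exact h2
    have : sInf {t : ℕ | h ≤ W t ω} = t + 1 := by
      refine le_antisymm (Nat.sInf_le (by simp only [Set.mem_ofPred_eq]; omega)) ?_
      by_contra hc
      have hm : sInf {t : ℕ | h ≤ W t ω} ∈ {t : ℕ | h ≤ W t ω} :=
        Nat.sInf_mem ⟨t + 1, by simp only [Set.mem_ofPred_eq]; omega⟩
      have := h1 (sInf {t : ℕ | h ≤ W t ω}) (by omega)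
      simp only [Set.mem_ofPred_eq] at hm
      omega
    rw [this]
    exact e

include hmeas hindep hWrec in
lemma jump_measure (h v : ℕ) (hhv : h ≤ v) (hkh : k < h) (hW0 : ∀ ω, W 0 ω = k) :
    μ {ω | v ≤ W (sInf {t : ℕ | h ≤ W t ω}) ω} =
      ∑' q : ℕ × ℕ, μ (pre W h q.1 q.2) * μ {ω | v ≤ rowSum X (q.2 + c) q.1 ω} := by
  rw [jump_union X c k W hWrec h v hhv hkh hW0, measure_iUnion]
  · exact tsum_congr fun q => pre_indep μ X hmeas hindep c k W hW0 hWrec h q.1 q.2 _ v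
  · intro q q' hqq
    rw [Function.onFun, Set.disjoint_left]
    rintro ω ⟨⟨h1, h2⟩, h3⟩ ⟨⟨h1', h2'⟩, h3'⟩
    simp only [Set.mem_ofPred_eq] at h3 h3'
    rw [← h2] at h3
    rw [← h2'] at h3'
    rw [rowSum, ← hWrec] at h3 h3'
    have e : q.1 = q'.1 := by
      rcases lt_trichotomy q.1 q'.1 with hl | hl | hl
      · have := h1' (q.1 + 1) hl
        omega
      · exact hl
      · have := h1 (q'.1 + 1) hl
        omega
    exact hqq (Prod.ext e (by rw [← h2, ← h2', e]))
  · intro q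
    exact (past_le X hmeas q.1 _ (pre_meas_past X c k W hW0 hWrec h q.1 q.2)).inter
      (rowSum_meas X hmeas _ _ measurableSet_Ici)

lemma hit_eq (h : ℕ) :
    {ω | ∃ t, h ≤ W t ω} = {ω | h ≤ W (sInf {t : ℕ | h ≤ W t ω}) ω} := by
  ext ω
  simp only [Set.mem_ofPred_eq]
  exact ⟨fun ⟨t, ht⟩ => Nat.sInf_mem (s := {t : ℕ | h ≤ W t ω}) ⟨t, ht⟩, fun hh => ⟨_, hh⟩⟩

include hmeas hindep hdist hW0 hWrec in
lemma main_ineq (h u : ℕ) (hkh : k ≤ h) (hhu : h ≤ u) :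
    μ {ω | u ≤ W (sInf {t : ℕ | h ≤ W t ω}) ω} * μ {ω | h ≤ rowSum X (h + c) 0 ω} ≤
      μ {ω | u ≤ rowSum X (h + c) 0 ω} * μ {ω | ∃ t, h ≤ W t ω} := by
  rcases hkh.lt_or_eq with hlt | rfl
  · rw [hit_eq, jump_measure μ X hmeas hindep c k W hWrec h u hhu hlt hW0,
      jump_measure μ X hmeas hindep c k W hWrec h h le_rfl hlt hW0,
      ← ENNReal.tsum_mul_right, ← ENNReal.tsum_mul_left]
    refine ENNReal.tsum_le_tsum fun q => ?_
    by_cases hq : q.2 < h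
    · have := rowSum_tail μ X hmeas hindep hdist q.1 0 (q.2 + c) (h + c) h u (by omega) hhu
      rw [mul_assoc, mul_left_comm (μ {ω | u ≤ rowSum X (h + c) 0 ω})]
      gcongr
    · have : pre W h q.1 q.2 = ∅ := by
        ext ω
        simp only [pre, Set.mem_ofPred_eq, Set.mem_empty_iff_false, iff_false, not_and]
        intro h1 h2
        have := h1 q.1 le_rfl
        omega
      simp [this]
  · have h0 : ∀ ω, sInf {t : ℕ | k ≤ W t ω} = 0 := fun ω => by
      rw [Nat.sInf_eq_zero]
      left
      simp [hW0]
    have h1 : {ω | ∃ t, k ≤ W t ω} = Set.univ := by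
      ext ω
      simp only [Set.mem_ofPred_eq, Set.mem_univ, iff_true]
      exact ⟨0, (hW0 ω).ge⟩
    simp only [h0, hW0, h1]
    rcases hhu.lt_or_eq with hlt | rfl
    · simp [Nat.not_le.2 hlt]
    · simp

include hmeas hindep hdist in
lemma den_ne_zero (h : ℕ) : μ {ω | h ≤ rowSum X (h + c) 0 ω} ≠ 0 := by
  intro h0
  refine nb_ne_zero h c ?_
  rw [← rowSum_law μ X hmeas hindep hdist 0 (h + c) h]
  exact measure_mono_null (fun ω (hω : rowSum X (h + c) 0 ω = h) => hω.ge) h0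

include hmeas in
lemma rhs_eq (h u : ℕ) (hhu : h ≤ u) :
    (μ[|{ω | h ≤ rowSum X (h + c) 0 ω}]) {ω | u ≤ rowSum X (h + c) 0 ω} =
      (μ {ω | h ≤ rowSum X (h + c) 0 ω})⁻¹ * μ {ω | u ≤ rowSum X (h + c) 0 ω} := by
  have hm : MeasurableSet {ω | h ≤ rowSum X (h + c) 0 ω} :=
    rowSum_meas X hmeas _ _ measurableSet_Ici
  rw [cond_apply hm]
  congr 2
  exact Set.inter_eq_right.2 fun ω (hω : u ≤ _) => hhu.trans hω

include hmeas hindep hdist hW0 hWrec in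
lemma uncond_bound (h u : ℕ) (hkh : k ≤ h) (hhu : h ≤ u) :
    μ {ω | u ≤ W (sInf {t : ℕ | h ≤ W t ω}) ω} ≤
      (μ[|{ω | h ≤ rowSum X (h + c) 0 ω}]) {ω | u ≤ rowSum X (h + c) 0 ω} *
        μ {ω | ∃ t, h ≤ W t ω} := by
  have := main_ineq μ X hmeas hindep hdist c k W hW0 hWrec h u hkh hhu
  rw [rhs_eq μ X hmeas c h u hhu, mul_assoc, mul_comm, ← div_eq_mul_inv]
  rwa [ENNReal.le_div_iff_mul_le (Or.inl (den_ne_zero μ X hmeas hindep hdist c h))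
    (Or.inl (measure_ne_top _ _))]

include hmeas hindep hdist hW0 hWrec in
lemma cond_bound (h u : ℕ) (hkh : k ≤ h) (hhu : h ≤ u) :
    (μ[|{ω | ∃ t, h ≤ W t ω}]) {ω | u ≤ W (sInf {t : ℕ | h ≤ W t ω}) ω} ≤
      (μ[|{ω | h ≤ rowSum X (h + c) 0 ω}]) {ω | u ≤ rowSum X (h + c) 0 ω} := by
  have hm : MeasurableSet {ω | ∃ t, h ≤ W t ω} := by
    have : {ω | ∃ t, h ≤ W t ω} = ⋃ t, W t ⁻¹' Set.Ici h := by ext ω; simp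
    rw [this]
    exact MeasurableSet.iUnion fun t => past_le X hmeas t _
      (W_meas_past X c k W hW0 hWrec t t le_rfl measurableSet_Ici)
  rw [cond_apply hm]
  have e : {ω | ∃ t, h ≤ W t ω} ∩ {ω | u ≤ W (sInf {t : ℕ | h ≤ W t ω}) ω} =
      {ω | u ≤ W (sInf {t : ℕ | h ≤ W t ω}) ω} :=
    Set.inter_eq_right.2 fun ω (hω : u ≤ _) => ⟨_, hhu.trans hω⟩
  rw [e, mul_comm, ← div_eq_mul_inv]
  exact ENNReal.div_le_of_le_mul
    (uncond_bound μ X hmeas hindep hdist c k W hW0 hWrec h u hkh hhu)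

end

end Overshoot

/-- **overshoot bounds.** For all integers `0 ≤ k ≤ h ≤ u`:
(a) for the critical geometric Galton–Watson chain `Y` started at `k`,
`P(Y_{σ_h} ≥ u | σ_h < ∞) ≤ P(Y_1 ≥ u | Y_0 = h, Y_1 ≥ h)`;
(b) for the chain `Z` with one immigrant per generation started at `k`,
`P(Z_{τ_h} ≥ u) ≤ P(Z_1 ≥ u | Z_0 = h, Z_1 ≥ h)`.
Here `Y_1` given `Y_0 = h` is represented by `∑_{i<h} XY_{0,i}` and `Z_1` given `Z_0 = h`
is represented by `∑_{i<h+1} XZ_{0,i}`. -/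
theorem overshoot_bounds
    {Ω : Type*} [MeasurableSpace Ω] (μ : Measure Ω) [IsProbabilityMeasure μ]
    -- i.i.d. offspring variables, geometric with mean 1: P(X_{t,i} = j) = 2^{-j-1}
    (XY XZ : ℕ → ℕ → Ω → ℕ)
    (hXYmeas : ∀ t i, Measurable (XY t i)) (hXZmeas : ∀ t i, Measurable (XZ t i))
    (hXYindep : iIndepFun (fun p : ℕ × ℕ => XY p.1 p.2) μ)
    (hXZindep : iIndepFun (fun p : ℕ × ℕ => XZ p.1 p.2) μ)
    (hXYdist : ∀ t i j, μ {ω | XY t i ω = j} = (1 / 2) ^ (j + 1))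
    (hXZdist : ∀ t i j, μ {ω | XZ t i ω = j} = (1 / 2) ^ (j + 1))
    (k h u : ℕ) (hkh : k ≤ h) (hhu : h ≤ u)
    -- the critical Galton–Watson chain Y started at k, with hitting time σ_h of [h, ∞)
    (Y : ℕ → Ω → ℕ) (hY0 : ∀ ω, Y 0 ω = k)
    (hYrec : ∀ t ω, Y (t + 1) ω = ∑ i ∈ Finset.range (Y t ω), XY t i ω)
    (σ : Ω → ℕ) (hσ : ∀ ω, σ ω = sInf {t : ℕ | h ≤ Y t ω})
    -- the chain Z with one immigrant per generation started at k, with hitting time τ_h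
    (Z : ℕ → Ω → ℕ) (hZ0 : ∀ ω, Z 0 ω = k)
    (hZrec : ∀ t ω, Z (t + 1) ω = ∑ i ∈ Finset.range (Z t ω + 1), XZ t i ω)
    (τ : Ω → ℕ) (hτ : ∀ ω, τ ω = sInf {t : ℕ | h ≤ Z t ω}) :
    (μ[|{ω | ∃ t, h ≤ Y t ω}]) {ω | u ≤ Y (σ ω) ω} ≤
      (μ[|{ω | h ≤ ∑ i ∈ Finset.range h, XY 0 i ω}])
        {ω | u ≤ ∑ i ∈ Finset.range h, XY 0 i ω} ∧
    μ {ω | u ≤ Z (τ ω) ω} ≤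
      (μ[|{ω | h ≤ ∑ i ∈ Finset.range (h + 1), XZ 0 i ω}])
        {ω | u ≤ ∑ i ∈ Finset.range (h + 1), XZ 0 i ω} := by
  obtain rfl : σ = fun ω => sInf {t : ℕ | h ≤ Y t ω} := funext hσ
  obtain rfl : τ = fun ω => sInf {t : ℕ | h ≤ Z t ω} := funext hτ
  constructor
  · exact Overshoot.cond_bound μ XY hXYmeas hXYindep hXYdist 0 k Y hY0 hYrec h u hkh hhu
  · refine (Overshoot.uncond_bound μ XZ hXZmeas hXZindep hXZdist 1 k Z hZ0 hZrec
      h u hkh hhu).trans ?_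
    exact mul_le_of_le_one_right zero_le prob_le_one
end

section
/- For every t ∈ ℕ and every x ∈ ℤ, the local time satisfies the deterministic pathwise identities L(t,x) = D(t,x) + D(t,x−1) + 1_{0 < x ≤ S_t} − 1_{S_t < x ≤ 0} and L(t,x) = U(t,x) + U(t,x+1) + 1_{S_t ≤ x < 0} − 1_{0 ≤ x < S_t}. These identities hold for every nearest-neighbour path (S_k)_{0≤k≤t} on ℤ with S_0 = 0 and |S_k − S_{k−1}| = 1 for all k. -/
/-- For every nearest-neighbour path `(S_k)_{0 ≤ k ≤ t}` on `ℤ` with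
`S_0 = 0`, the local time satisfies the deterministic pathwise identities
`L(t,x) = D(t,x) + D(t,x−1) + 1_{0 < x ≤ S_t} − 1_{S_t < x ≤ 0}` and
`L(t,x) = U(t,x) + U(t,x+1) + 1_{S_t ≤ x < 0} − 1_{0 ≤ x < S_t}`. -/
theorem local_time_crossing_identities
    (t : ℕ) (S : ℕ → ℤ) (hS0 : S 0 = 0)
    (hstep : ∀ k : ℕ, 1 ≤ k → k ≤ t → S k - S (k - 1) = 1 ∨ S k - S (k - 1) = -1)
    (x : ℤ)
    (L U D : ℤ → ℕ)
    (hL : ∀ y, L y = ((Finset.Icc 1 t).filter fun k => S k = y).card)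
    (hU : ∀ y, U y = ((Finset.Icc 1 t).filter fun k => S k = y ∧ S (k - 1) = y - 1).card)
    (hD : ∀ y, D y = ((Finset.Icc 1 t).filter fun k => S k = y ∧ S (k - 1) = y + 1).card) :
    (L x : ℤ) = (D x : ℤ) + (D (x - 1) : ℤ)
        + (if 0 < x ∧ x ≤ S t then 1 else 0) - (if S t < x ∧ x ≤ 0 then 1 else 0) ∧
    (L x : ℤ) = (U x : ℤ) + (U (x + 1) : ℤ)
        + (if S t ≤ x ∧ x < 0 then 1 else 0) - (if 0 ≤ x ∧ x < S t then 1 else 0) := by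
  simp only [hL, hU, hD, Finset.card_filter]
  clear hL hU hD
  push_cast
  induction t with
  | zero =>
    simp only [hS0]
    constructor <;> simp <;> split_ifs <;> omega
  | succ n ih =>
    obtain ⟨h1, h2⟩ := ih (fun k hk hk' => hstep k hk (by omega))
    have h := hstep (n + 1) (by omega) le_rfl
    simp only [Finset.sum_Icc_succ_top (show 1 ≤ n + 1 by omega), Nat.add_sub_cancel] at h ⊢
    rw [h1] at h2 ⊢
    generalize S (n + 1) = b at *
    generalize S n = a at *
    constructor
    · clear h2
      split_ifs <;> omega
    · rw [h2]
      clear h1 h2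
      split_ifs <;> omega
end
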